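/- Selberg–Morris integral: Let n ≥ 1 and let α, β, γ ∈ ℂ satisfy Re α > −1/2 and Re γ > −min{1/n, Re(2α+1)/(n−1)} (the second constraint being vacuous if n = 1). Then ∫_0^{2π} ⋯ ∫_0^{2π} ∏_{0≤j<k≤n-1} |e^{iθ_j} − e^{iθ_k}|^{2γ} · ∏_{j=0}^{n-1} e^{i(θ_j − π)β}·|1 − e^{iθ_j}|^{2α} dθ_j/(2π) = ∏_{j=0}^{n-1} [Γ(1 + 2α + jγ)·Γ(1 + (j+1)γ)] / [Γ(1 + α + β + jγ)·Γ(1 + α − β + jγ)·Γ(1 + γ)]. -/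

import Mathlib

/-!
The value is found by treating the integral `J n α β γ` first as a function of `(α, β)` and then as
a function of `γ`.

*Convergence and holomorphy.* For `γ ≤ 0` the integrand is dominated by a weighted geometric mean
of integrands attached to the star-shaped spanning trees on the points `1, e^{iθ_0}, …`, each of
which is integrable by integrating out the leaves (`integrable_star`); convexity of `exp` then gives
exactly the stated domain (`integrable_real`). Inside the domain the integral is a Laplace transform
in `α` and in `γ`, hence holomorphic in each (`differentiableOn_J_α`, `differentiableOn_J_γ`). So it
is enough to treat real `γ ≥ 1` and large `Re α`.

*Shift invariance.* Aomoto's argument, integration by parts against `∏_{s ∈ S} (1 - e^{iθ_s})`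
combined with the symmetry under exchange of variables, relates the integrals at `(α, β)` and
`(α + 1/2, β + 1/2)` (`J_half_shift`). After multiplication by Gamma factors one gets a function `H`
with `H (α + 1/2) (β + 1/2) = H α β`. As `H` is also even in `β`, it is invariant under
`α ↦ α + 1` (`H_one_shift`).

*`H` is constant in `(α, β)`.* By the invariance it may be computed at `α + N` with `N → ∞`. The
Gamma factors have explicit asymptotics (`tendsto_gprod_ratio`), and they also show that the mass of
the integrand concentrates at `θ = (π, …, π)` (`tendsto_rdens_ratio`), so that the dependence of the
integral on `(α, β)` is asymptotically the value of the weight at that point (`tendsto_J_ratio`). The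
two contributions cancel (`H_eq`).

*The constant.* At `α = β = 0` the integrand is invariant under rotations, so one of the `n + 1`
points may be fixed at `1`, which turns the integral into `2π` times the `n`-point integral with
`α = γ` and `β = 0` (`J_rotate`). Induction on `n` and a telescoping product give the constant
(`J_eq_of_one_le`), and analytic continuation in `γ` gives the result (`J_eq`).
-/

open MeasureTheory Filter Topology

namespace Morris

/-! ### The circle, the torus and the integrand -/

/-- The chord length `|e^{ix} - 1| = |2 sin (x / 2)|`. -/
noncomputable def chord (x : ℝ) : ℝ := |2 * Real.sin (x / 2)|

lemma chord_nonneg (x : ℝ) : 0 ≤ chord x := abs_nonneg _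

lemma chord_neg (x : ℝ) : chord (-x) = chord x := by
  simp [chord, neg_div]

lemma chord_le_two (x : ℝ) : chord x ≤ 2 := by
  unfold chord
  rw [abs_mul, abs_two]
  nlinarith [Real.abs_sin_le_one (x / 2)]

lemma continuous_chord : Continuous chord := by
  unfold chord; fun_prop

lemma chord_periodic : Function.Periodic chord (2 * Real.pi) := by
  intro x
  unfold chord
  rw [show (x + 2 * Real.pi) / 2 = x / 2 + Real.pi by ring, Real.sin_add_pi]
  simp

lemma chord_two_pi_sub (x : ℝ) : chord (2 * Real.pi - x) = chord x := by
  rw [← chord_neg x, ← chord_periodic (-x)]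
  ring_nf

lemma chord_sub_comm (x y : ℝ) : chord (x - y) = chord (y - x) := by
  rw [← chord_neg, neg_sub]

lemma norm_exp_sub_one (x : ℝ) : ‖1 - Complex.exp (Complex.I * x)‖ = chord x := by
  rw [norm_sub_rev, Complex.norm_exp_I_mul_ofReal_sub_one, Real.norm_eq_abs, chord]

lemma norm_exp_sub_exp (x y : ℝ) :
    ‖Complex.exp (Complex.I * x) - Complex.exp (Complex.I * y)‖ = chord (x - y) := by
  have h : Complex.exp (Complex.I * x) - Complex.exp (Complex.I * y)
      = Complex.exp (Complex.I * y) * (Complex.exp (Complex.I * ((x - y : ℝ) : ℂ)) - 1) := by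
    rw [mul_sub, ← Complex.exp_add, mul_one]
    congr 2
    push_cast
    ring
  rw [h, norm_mul, Complex.norm_exp_I_mul_ofReal, one_mul,
    Complex.norm_exp_I_mul_ofReal_sub_one, Real.norm_eq_abs, chord]

lemma countable_chord_zero (c : ℝ) : {x : ℝ | chord (x - c) = 0}.Countable := by
  refine (Set.countable_range (fun m : ℤ => 2 * (m * Real.pi) + c)).mono ?_
  intro x hx
  have hs : Real.sin ((x - c) / 2) = 0 := by
    simpa [chord] using hx
  obtain ⟨m, hm⟩ := Real.sin_eq_zero_iff.1 hs
  exact ⟨m, by simp only; rw [hm]; ring⟩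

/-- Lebesgue measure on one period `(0, 2π]`. -/
noncomputable def circ : Measure ℝ := volume.restrict (Set.Ioc 0 (2 * Real.pi))

instance : IsFiniteMeasure circ := by unfold circ; infer_instance

lemma circ_apply_countable {s : Set ℝ} (hs : s.Countable) : circ s = 0 :=
  le_antisymm ((Measure.restrict_apply_le _ _).trans (hs.measure_zero volume).le) bot_le

/-- The product measure of `n` copies of `circ`. -/
noncomputable def torus (n : ℕ) : Measure (Fin n → ℝ) := Measure.pi (fun _ => circ)

instance (n : ℕ) : IsFiniteMeasure (torus n) := by unfold torus; infer_instance

lemma torus_eq_restrict (n : ℕ) : torus n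
    = volume.restrict (Set.univ.pi (fun _ : Fin n => Set.Ioc (0 : ℝ) (2 * Real.pi))) := by
  unfold torus circ
  rw [volume_pi, Measure.restrict_pi_pi]

lemma torus_split {n : ℕ} (i : Fin (n + 1)) :
    MeasurePreserving (MeasurableEquiv.piFinSuccAbove (fun _ : Fin (n + 1) => ℝ) i)
      (torus (n + 1)) (circ.prod (torus n)) :=
  measurePreserving_piFinSuccAbove (fun _ : Fin (n + 1) => circ) i

lemma torus_split_symm {n : ℕ} (i : Fin (n + 1)) :
    MeasurePreserving (fun p : ℝ × (Fin n → ℝ) => (i.insertNth p.1 p.2 : Fin (n + 1) → ℝ))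
      (circ.prod (torus n)) (torus (n + 1)) :=
  (torus_split i).symm _

lemma integrable_torus_iff {n : ℕ} {E : Type*} [NormedAddCommGroup E] (i : Fin (n + 1))
    (f : (Fin (n + 1) → ℝ) → E) :
    Integrable f (torus (n + 1)) ↔
      Integrable (fun p : ℝ × (Fin n → ℝ) => f (i.insertNth p.1 p.2)) (circ.prod (torus n)) :=
  (((torus_split i).symm _).integrable_comp_emb
    (MeasurableEquiv.measurableEmbedding _)).symm

lemma integral_torus_split {n : ℕ} {E : Type*} [NormedAddCommGroup E] [NormedSpace ℝ E]
    (i : Fin (n + 1)) (f : (Fin (n + 1) → ℝ) → E) :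
    ∫ θ, f θ ∂torus (n + 1) =
      ∫ p : ℝ × (Fin n → ℝ), f (i.insertNth p.1 p.2) ∂(circ.prod (torus n)) :=
  (((torus_split i).symm _).integral_comp
    (MeasurableEquiv.measurableEmbedding _) f).symm

lemma ae_torus_chord_ne (n : ℕ) (j k : Fin n) (h : j ≠ k) :
    ∀ᵐ θ ∂torus n, chord (θ j - θ k) ≠ 0 := by
  obtain _ | n := n
  · exact j.elim0
  obtain ⟨l, rfl⟩ := Fin.exists_succAbove_eq h.symm
  have hm : MeasurableSet {θ : Fin (n + 1) → ℝ | chord (θ j - θ (j.succAbove l)) = 0} := by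
    refine measurableSet_eq_fun ?_ measurable_const
    exact continuous_chord.measurable.comp (by fun_prop)
  rw [ae_iff]
  simp only [ne_eq, not_not]
  have hm' : MeasurableSet {p : ℝ × (Fin n → ℝ) | chord (p.1 - p.2 l) = 0} := by
    refine measurableSet_eq_fun ?_ measurable_const
    exact continuous_chord.measurable.comp (by fun_prop)
  rw [← (torus_split_symm j).measure_preimage hm.nullMeasurableSet]
  have : (fun p : ℝ × (Fin n → ℝ) => (j.insertNth p.1 p.2 : Fin (n + 1) → ℝ)) ⁻¹'
      {θ | chord (θ j - θ (j.succAbove l)) = 0} = {p | chord (p.1 - p.2 l) = 0} := by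
    ext p; simp
  rw [this, Measure.prod_apply_symm hm', lintegral_eq_zero_iff (measurable_measure_prodMk_right hm')]
  exact Eventually.of_forall fun y => circ_apply_countable (countable_chord_zero (y l))

lemma ae_torus_chord_ne' (n : ℕ) (j : Fin n) :
    ∀ᵐ θ ∂torus n, chord (θ j) ≠ 0 := by
  have h : ∀ᵐ x ∂circ, chord x ≠ 0 := by
    rw [ae_iff]
    simpa using circ_apply_countable (countable_chord_zero 0)
  exact (Measure.quasiMeasurePreserving_eval (fun _ : Fin n => circ) j).ae h

/-- Almost every configuration consists of distinct points of the circle, all different from `1`. -/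
lemma ae_torus_generic (n : ℕ) : ∀ᵐ θ ∂torus n,
    (∀ j, chord (θ j) ≠ 0) ∧ ∀ j k, j ≠ k → chord (θ j - θ k) ≠ 0 := by
  refine Filter.Eventually.and ?_ ?_
  · exact ae_all_iff.2 fun j => ae_torus_chord_ne' n j
  · refine ae_all_iff.2 fun j => ae_all_iff.2 fun k => ?_
    by_cases h : j = k
    · exact Eventually.of_forall fun _ h' => absurd h h'
    · filter_upwards [ae_torus_chord_ne n j k h] with θ hθ _ using hθ

/-- `chord x ^ c` for a complex exponent. -/
noncomputable def cpw (c : ℂ) (x : ℝ) : ℂ := (chord x : ℂ) ^ c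

lemma cpw_eq_exp (c : ℂ) {x : ℝ} (hx : chord x ≠ 0) :
    cpw c x = Complex.exp (c * Real.log (chord x)) := by
  rw [cpw, Complex.cpow_def_of_ne_zero (by exact_mod_cast hx), mul_comm,
    Complex.ofReal_log (chord_nonneg x)]

lemma measurable_cpw (c : ℂ) : Measurable (cpw c) := by
  unfold cpw
  exact (Complex.measurable_ofReal.comp continuous_chord.measurable).pow_const c

lemma continuous_cpw {c : ℂ} (hc : 0 < c.re) : Continuous (cpw c) :=
  (Complex.continuous_ofReal_cpow_const hc).comp continuous_chord

lemma cpw_zero_of_chord {c : ℂ} (hc : 0 < c.re) {x : ℝ} (hx : chord x = 0) : cpw c x = 0 := by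
  rw [cpw, hx, Complex.ofReal_zero, Complex.zero_cpow]
  rintro rfl; simp at hc

lemma cpw_neg (c : ℂ) (x : ℝ) : cpw c (-x) = cpw c x := by
  rw [cpw, chord_neg, cpw]

lemma cpw_sub_comm (c : ℂ) (x y : ℝ) : cpw c (x - y) = cpw c (y - x) := by
  rw [cpw, chord_sub_comm, cpw]

lemma norm_cpw_le {c : ℂ} (hc : 0 < c.re) (x : ℝ) : ‖cpw c x‖ ≤ 2 ^ c.re := by
  rw [cpw, Complex.norm_cpow_eq_rpow_re_of_nonneg (chord_nonneg x) hc.ne']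
  exact Real.rpow_le_rpow (chord_nonneg x) (chord_le_two x) hc.le

/-- `∏_{j ≠ k} |e^{iθ_j} - e^{iθ_k}|^γ` over ordered pairs, that is
`∏_{j < k} |e^{iθ_j} - e^{iθ_k}|^{2γ}`. -/
noncomputable def vand {n : ℕ} (γ : ℂ) (θ : Fin n → ℝ) : ℂ :=
  ∏ j, ∏ k ∈ {j}ᶜ, cpw γ (θ j - θ k)

/-- The one-variable weight `e^{i(x-π)β} |1 - e^{ix}|^{2α}`. -/
noncomputable def wt (α β : ℂ) (x : ℝ) : ℂ :=
  Complex.exp (Complex.I * ((x - Real.pi : ℝ) : ℂ) * β) * cpw (2 * α) x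

/-- The integrand of the Morris integral. -/
noncomputable def dens {n : ℕ} (α β γ : ℂ) (θ : Fin n → ℝ) : ℂ :=
  vand γ θ * ∏ j, wt α β (θ j)

/-- The Morris integral, without the factor `(2π)^{-n}`. -/
noncomputable def J (n : ℕ) (α β γ : ℂ) : ℂ := ∫ θ, dens α β γ θ ∂torus n

/-- `2 ∑_{j < k} log |e^{iθ_j} - e^{iθ_k}|`. -/
noncomputable def logV {n : ℕ} (θ : Fin n → ℝ) : ℝ :=
  ∑ j, ∑ k ∈ {j}ᶜ, Real.log (chord (θ j - θ k))

/-- `2 ∑_j log |1 - e^{iθ_j}|`. -/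
noncomputable def logW {n : ℕ} (θ : Fin n → ℝ) : ℝ := ∑ j, 2 * Real.log (chord (θ j))

/-- The phase `∏_j e^{i(θ_j-π)β}`. -/
noncomputable def phase {n : ℕ} (β : ℂ) (θ : Fin n → ℝ) : ℂ :=
  ∏ j, Complex.exp (Complex.I * ((θ j - Real.pi : ℝ) : ℂ) * β)

lemma dens_eq_exp {n : ℕ} (α β γ : ℂ) (θ : Fin n → ℝ) (h0 : ∀ j, chord (θ j) ≠ 0)
    (h1 : ∀ j k, j ≠ k → chord (θ j - θ k) ≠ 0) :
    dens α β γ θ = Complex.exp (γ * logV θ) * (Complex.exp (α * logW θ) * phase β θ) := by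
  have hv : vand γ θ = Complex.exp (γ * logV θ) := by
    simp only [vand, logV]
    push_cast
    rw [Finset.mul_sum, Complex.exp_sum]
    refine Finset.prod_congr rfl fun j _ => ?_
    rw [Finset.mul_sum, Complex.exp_sum]
    refine Finset.prod_congr rfl fun k hk => ?_
    rw [cpw_eq_exp]
    exact h1 j k (by simpa [eq_comm] using hk)
  have hw : ∏ j, wt α β (θ j) = Complex.exp (α * logW θ) * phase β θ := by
    simp only [wt, phase, logW, Finset.prod_mul_distrib]
    rw [mul_comm]
    congr 1
    push_cast
    rw [Finset.mul_sum, Complex.exp_sum]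
    refine Finset.prod_congr rfl fun j _ => ?_
    rw [cpw_eq_exp _ (h0 j)]
    ring_nf
  rw [dens, hv, hw]

lemma dens_ae_eq_exp (n : ℕ) (α β γ : ℂ) : (fun θ : Fin n → ℝ => dens α β γ θ) =ᵐ[torus n]
    fun θ => Complex.exp (γ * logV θ) * (Complex.exp (α * logW θ) * phase β θ) := by
  filter_upwards [ae_torus_generic n] with θ hθ using dens_eq_exp α β γ θ hθ.1 hθ.2

lemma measurable_logV (n : ℕ) : Measurable (logV (n := n)) := by
  unfold logV
  refine Finset.measurable_sum _ fun j _ => Finset.measurable_sum _ fun k _ => ?_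
  exact Real.measurable_log.comp (continuous_chord.measurable.comp (by fun_prop))

lemma measurable_logW (n : ℕ) : Measurable (logW (n := n)) := by
  unfold logW
  refine Finset.measurable_sum _ fun j _ => ?_
  exact (Real.measurable_log.comp
    (continuous_chord.measurable.comp (by fun_prop))).const_mul 2

lemma continuous_phase (n : ℕ) (β : ℂ) : Continuous (phase (n := n) β) := by
  unfold phase; fun_prop

/-! ### Absolute convergence -/

/-- `|1 - e^{ix}|^{-s}`. -/
noncomputable def kern (s x : ℝ) : ℝ := Real.exp (-s * Real.log (chord x))

lemma kern_periodic (s : ℝ) : Function.Periodic (kern s) (2 * Real.pi) := by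
  intro x; simp only [kern, chord_periodic x]

lemma kern_neg (s x : ℝ) : kern s (-x) = kern s x := by
  simp only [kern, chord_neg]

lemma kern_pos (s x : ℝ) : 0 < kern s x := Real.exp_pos _

lemma measurable_kern (s : ℝ) : Measurable (kern s) :=
  ((Real.measurable_log.comp continuous_chord.measurable).const_mul _).exp

lemma kern_le_aux {s : ℝ} (hs : 0 ≤ s) {x : ℝ} (hx0 : 0 < x) (hx1 : x ≤ Real.pi) :
    kern s x ≤ (2 / Real.pi) ^ (-s) * x ^ (-s) := by
  have hpi := Real.pi_pos
  have h1 : 2 / Real.pi * x ≤ chord x := by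
    have := Real.mul_le_sin (x := x / 2) (by linarith) (by linarith)
    unfold chord
    refine le_trans ?_ (le_abs_self _)
    linarith
  have h2 : 0 < 2 / Real.pi * x := by positivity
  rw [← Real.mul_rpow (by positivity) hx0.le, Real.rpow_def_of_pos h2, kern]
  apply Real.exp_le_exp.2
  have := Real.log_le_log h2 h1
  nlinarith

lemma integrable_kern {s : ℝ} (hs : 0 ≤ s) (hs1 : s < 1) : Integrable (kern s) circ := by
  have hpi := Real.pi_pos
  have h1 : IntervalIntegrable (fun x : ℝ => x ^ (-s)) volume 0 (2 * Real.pi) :=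
    intervalIntegral.intervalIntegrable_rpow' (by linarith)
  have h2 : IntervalIntegrable (fun x : ℝ => (2 * Real.pi - x) ^ (-s)) volume 0 (2 * Real.pi) := by
    have := (h1.comp_sub_left (2 * Real.pi)).symm
    simpa using this
  have h3 : Integrable (fun x : ℝ => (2 / Real.pi) ^ (-s) * (x ^ (-s) + (2 * Real.pi - x) ^ (-s)))
      circ := by
    have := (h1.add h2).const_mul ((2 / Real.pi) ^ (-s))
    rw [intervalIntegrable_iff_integrableOn_Ioc_of_le (by positivity)] at this
    exact this
  refine h3.mono' (measurable_kern s).aestronglyMeasurable ?_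
  have hne : ∀ᵐ x ∂circ, x ≠ 2 * Real.pi := by
    rw [ae_iff]
    simpa using circ_apply_countable (Set.countable_singleton (2 * Real.pi))
  have hmem : ∀ᵐ x ∂circ, x ∈ Set.Ioc 0 (2 * Real.pi) := ae_restrict_mem measurableSet_Ioc
  filter_upwards [hne, hmem] with x hx hx'
  have hlt : x < 2 * Real.pi := lt_of_le_of_ne hx'.2 hx
  rw [Real.norm_eq_abs, abs_of_pos (kern_pos s x), mul_add]
  have p1 : 0 ≤ (2 / Real.pi) ^ (-s) * x ^ (-s) := by
    have := hx'.1; positivity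
  have p2 : 0 ≤ (2 / Real.pi) ^ (-s) * (2 * Real.pi - x) ^ (-s) := by
    have : 0 < 2 * Real.pi - x := by linarith
    positivity
  rcases le_total x Real.pi with h | h
  · linarith [kern_le_aux hs hx'.1 h]
  · have := kern_le_aux hs (x := 2 * Real.pi - x) (by linarith) (by linarith)
    rw [show kern s (2 * Real.pi - x) = kern s x by simp only [kern, chord_two_pi_sub]] at this
    linarith

lemma integrable_circ_iff {E : Type*} [NormedAddCommGroup E] (f : ℝ → E) :
    Integrable f circ ↔ IntervalIntegrable f volume 0 (2 * Real.pi) := by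
  rw [intervalIntegrable_iff_integrableOn_Ioc_of_le (by positivity)]
  rfl

lemma integral_circ {E : Type*} [NormedAddCommGroup E] [NormedSpace ℝ E] (f : ℝ → E) :
    ∫ x, f x ∂circ = ∫ x in (0 : ℝ)..(2 * Real.pi), f x := by
  rw [intervalIntegral.integral_of_le (by positivity)]
  rfl

lemma integrable_kern_sub {s : ℝ} (hs : 0 ≤ s) (hs1 : s < 1) (c : ℝ) :
    Integrable (fun x => kern s (c - x)) circ := by
  have h := (integrable_circ_iff _).1 (integrable_kern hs hs1)
  have h' := (kern_periodic s).intervalIntegrable (t := 0) (by positivity)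
    (by simpa using h) c (c - 2 * Real.pi)
  rw [integrable_circ_iff]
  have := h'.comp_sub_left c
  simpa using this

lemma integral_kern_sub (s c : ℝ) :
    ∫ x, kern s (c - x) ∂circ = ∫ x, kern s x ∂circ := by
  rw [integral_circ, integral_circ, intervalIntegral.integral_comp_sub_left (fun x => kern s x)]
  have := (kern_periodic s).intervalIntegral_add_eq (c - 2 * Real.pi) 0
  simpa using this

lemma prod_compl_succAbove {M : Type*} [CommMonoid M] {n : ℕ} (i : Fin (n + 1))
    (f : Fin (n + 1) → M) : ∏ k ∈ {i}ᶜ, f k = ∏ l, f (i.succAbove l) := by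
  rw [← Fin.image_succAbove_univ, Finset.prod_image]
  intro a _ b _ h
  exact Fin.succAbove_right_injective h

lemma sum_compl_succAbove {M : Type*} [AddCommMonoid M] {n : ℕ} (i : Fin (n + 1))
    (f : Fin (n + 1) → M) : ∑ k ∈ {i}ᶜ, f k = ∑ l, f (i.succAbove l) := by
  rw [← Fin.image_succAbove_univ, Finset.sum_image]
  intro a _ b _ h
  exact Fin.succAbove_right_injective h

/-- Logarithm of the product of the chords along the spanning tree of the points
`1, e^{iθ_0}, …, e^{iθ_{n-1}}` in which `e^{iθ_j}` is joined to all other points. -/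
noncomputable def star {n : ℕ} (j : Fin n) (θ : Fin n → ℝ) : ℝ :=
  Real.log (chord (θ j)) + ∑ k ∈ {j}ᶜ, Real.log (chord (θ j - θ k))

/-- The same as `star` for the tree in which `1` is joined to all other points. -/
noncomputable def star₀ {n : ℕ} (θ : Fin n → ℝ) : ℝ := ∑ k, Real.log (chord (θ k))

lemma integrable_star₀ (n : ℕ) {s : ℝ} (hs : 0 ≤ s) (hs1 : s < 1) :
    Integrable (fun θ : Fin n → ℝ => Real.exp (-s * star₀ θ)) (torus n) := by
  have : (fun θ : Fin n → ℝ => Real.exp (-s * star₀ θ)) = fun θ => ∏ k, kern s (θ k) := by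
    funext θ
    rw [star₀, Finset.mul_sum, Real.exp_sum]
    rfl
  rw [this]
  exact Integrable.fintype_prod (f := fun _ : Fin n => kern s) fun _ => integrable_kern hs hs1

/-- Integrating out the leaves of the tree leaves `|1 - e^{iθ_j}|^{-s}` times a constant. -/
lemma integrable_star {n : ℕ} (j : Fin n) {s : ℝ} (hs : 0 ≤ s) (hs1 : s < 1) :
    Integrable (fun θ : Fin n → ℝ => Real.exp (-s * star j θ)) (torus n) := by
  obtain _ | n := n
  · exact j.elim0
  rw [integrable_torus_iff j]
  have : (fun p : ℝ × (Fin n → ℝ) => Real.exp (-s * star j (j.insertNth p.1 p.2))) =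
      fun p => kern s p.1 * ∏ l, kern s (p.1 - p.2 l) := by
    funext p
    rw [star, sum_compl_succAbove, mul_add, Real.exp_add, Finset.mul_sum, Real.exp_sum]
    simp [kern]
  rw [this]
  have hmeas : Measurable fun p : ℝ × (Fin n → ℝ) => kern s p.1 * ∏ l, kern s (p.1 - p.2 l) := by
    refine ((measurable_kern s).comp measurable_fst).mul ?_
    exact Finset.measurable_prod _ fun l _ => (measurable_kern s).comp (by fun_prop)
  rw [integrable_prod_iff hmeas.aestronglyMeasurable]
  constructor
  · refine Eventually.of_forall fun x => ?_
    have h1 : Integrable (fun y : Fin n → ℝ => ∏ l, kern s (x - y l)) (torus n) :=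
      Integrable.fintype_prod (f := fun _ : Fin n => fun y => kern s (x - y))
        fun _ => integrable_kern_sub hs hs1 x
    exact h1.const_mul (kern s x)
  · have h2 : (fun x => ∫ y, ‖kern s x * ∏ l, kern s (x - y l)‖ ∂torus n) =
        fun x => kern s x * (∫ y, kern s y ∂circ) ^ n := by
      funext x
      have h3 : ∀ y : Fin n → ℝ, ‖kern s x * ∏ l, kern s (x - y l)‖
          = kern s x * ∏ l, kern s (x - y l) := fun y => by
        rw [Real.norm_eq_abs, abs_of_nonneg]
        exact mul_nonneg (kern_pos _ _).le (Finset.prod_nonneg fun _ _ => (kern_pos _ _).le)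
      simp only [h3]
      rw [integral_const_mul, torus,
        integral_fintype_prod_eq_prod (fun _ : Fin n => fun y => kern s (x - y))]
      simp only [integral_kern_sub]
      simp
    simp only [h2]
    exact (integrable_kern hs hs1).mul_const _

lemma sum_star {n : ℕ} (θ : Fin n → ℝ) : ∑ j, star j θ = star₀ θ + logV θ := by
  simp only [star, star₀, logV, Finset.sum_add_distrib]

lemma log_chord_le (x : ℝ) : Real.log (chord x) ≤ Real.log 2 := by
  rcases (chord_nonneg x).eq_or_lt with h | h
  · rw [← h, Real.log_zero]; exact Real.log_nonneg (by norm_num)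
  · exact Real.log_le_log h (chord_le_two x)

lemma star₀_le {n : ℕ} (θ : Fin n → ℝ) : star₀ θ ≤ n * Real.log 2 := by
  refine (Finset.sum_le_sum fun k _ => log_chord_le (θ k)).trans ?_
  simp

lemma logW_le {n : ℕ} (θ : Fin n → ℝ) : logW θ ≤ 2 * (n * Real.log 2) := by
  rw [logW, ← Finset.mul_sum]
  exact mul_le_mul_of_nonneg_left (star₀_le θ) (by norm_num)

lemma logV_le {n : ℕ} (θ : Fin n → ℝ) : logV θ ≤ n * (n * Real.log 2) := by
  have hl := Real.log_nonneg (x := 2) (by norm_num)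
  refine (Finset.sum_le_sum (g := fun _ => n * Real.log 2) fun j _ => ?_).trans (by simp)
  refine (Finset.sum_le_sum (g := fun _ => Real.log 2) fun k _ => log_chord_le _).trans ?_
  rw [Finset.sum_const, nsmul_eq_mul]
  gcongr
  simpa using Finset.card_le_univ ({j}ᶜ : Finset (Fin n))

/-- The real parameters for which the Morris integral converges absolutely. -/
structure Dom (n : ℕ) (α γ : ℝ) : Prop where
  a : 0 < 1 + 2 * α
  g : 0 < 1 + n * γ
  ag : 0 < 1 + 2 * α + (n - 1) * γ

/-- For `γ ≤ 0` the integrand is, up to a bounded factor, a weighted geometric mean of the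
reciprocal tree products with exponent `s < 1`; the domain conditions say that suitable weights
exist. -/
lemma integrable_real_of_nonpos {n : ℕ} {α γ : ℝ} (h : Dom n α γ) (hγ : γ ≤ 0) :
    Integrable (fun θ : Fin n → ℝ => Real.exp (γ * logV θ + α * logW θ)) (torus n) := by
  obtain ⟨ha, hg, hag⟩ := h
  obtain ⟨s, hs0, hs1, hsg, hsa⟩ : ∃ s : ℝ, 0 < s ∧ s < 1 ∧ n * (-γ) ≤ s ∧
      0 ≤ s + (n - 1) * γ + 2 * α := by
    refine ⟨max (1 / 2) (max (n * (-γ)) (-((n - 1) * γ + 2 * α))), ?_, ?_, ?_, ?_⟩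
    · exact lt_max_of_lt_left (by norm_num)
    · refine max_lt (by norm_num) (max_lt (by linarith) (by linarith))
    · exact le_max_of_le_right (le_max_left _ _)
    · have : -((n - 1) * γ + 2 * α) ≤ max (1 / 2) (max (n * (-γ)) (-((n - 1) * γ + 2 * α))) :=
        le_max_of_le_right (le_max_right _ _)
      linarith
  set q : ℝ := -γ / s with hq
  have hq0 : 0 ≤ q := by rw [hq]; exact div_nonneg (by linarith) hs0.le
  have hsq : s * q = -γ := by rw [hq]; field_simp
  have hp0 : 0 ≤ 1 - n * q := by
    have : n * q = n * (-γ) / s := by rw [hq]; ring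
    rw [this, sub_nonneg, div_le_one hs0]
    exact hsg
  set C := (s + (n - 1) * γ + 2 * α) * (n * Real.log 2) with hC
  have hbound : Integrable (fun θ : Fin n → ℝ => Real.exp C *
      ((1 - n * q) * Real.exp (-s * star₀ θ) + ∑ j, q * Real.exp (-s * star j θ))) (torus n) := by
    refine Integrable.const_mul (Integrable.add ((integrable_star₀ n hs0.le hs1).const_mul _) ?_) _
    exact integrable_finsetSum _ fun j _ => (integrable_star j hs0.le hs1).const_mul _
  refine hbound.mono' ?_ (Eventually.of_forall fun θ => ?_)
  · exact (((measurable_logV n).const_mul _).add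
      ((measurable_logW n).const_mul _)).exp.aestronglyMeasurable
  rw [Real.norm_eq_abs, abs_of_pos (Real.exp_pos _)]
  have hconv := convexOn_exp.map_sum_le (t := (Finset.univ : Finset (Option (Fin n))))
    (w := fun o => o.elim (1 - n * q) fun _ => q)
    (p := fun o => -s * o.elim (star₀ θ) fun j => star j θ)
    (by rintro (_ | j) _ <;> simp [hp0, hq0]) (by simp [Fintype.sum_option])
    (by simp)
  simp only [Fintype.sum_option, Option.elim_none, Option.elim_some, smul_eq_mul] at hconv
  have hid : γ * logV θ + α * logW θ = (s + (n - 1) * γ + 2 * α) * star₀ θ +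
      ((1 - n * q) * (-s * star₀ θ) + ∑ j, q * (-s * star j θ)) := by
    have hW : logW θ = 2 * star₀ θ := by rw [logW, star₀, Finset.mul_sum]
    rw [← Finset.mul_sum, ← Finset.mul_sum, sum_star, hW]
    have : q * (-s * (star₀ θ + logV θ)) = γ * (star₀ θ + logV θ) := by
      rw [← mul_assoc, show q * -s = γ by linarith]
    rw [this]
    linear_combination (-(star₀ θ * n)) * hsq
  rw [hid, Real.exp_add]
  refine mul_le_mul ?_ hconv (Real.exp_pos _).le (Real.exp_pos _).le
  exact Real.exp_le_exp.2 (mul_le_mul_of_nonneg_left (star₀_le θ) hsa)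

/-- For `γ ≥ 0` the interaction is bounded, which reduces the claim to `γ = 0`. -/
lemma integrable_real {n : ℕ} {α γ : ℝ} (h : Dom n α γ) :
    Integrable (fun θ : Fin n → ℝ => Real.exp (γ * logV θ + α * logW θ)) (torus n) := by
  rcases le_total γ 0 with hγ | hγ
  · exact integrable_real_of_nonpos h hγ
  have h0 := integrable_real_of_nonpos (n := n) (α := α) (γ := 0)
    ⟨h.a, by simp, by simpa using h.a⟩ le_rfl
  refine (h0.const_mul (Real.exp (γ * (n * (n * Real.log 2))))).mono' ?_
    (Eventually.of_forall fun θ => ?_)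
  · exact (((measurable_logV n).const_mul _).add
      ((measurable_logW n).const_mul _)).exp.aestronglyMeasurable
  · rw [Real.norm_eq_abs, abs_of_pos (Real.exp_pos _), zero_mul, zero_add, Real.exp_add]
    gcongr
    exact logV_le θ

/-! ### Holomorphy in the exponents -/

/-- A two-sided Laplace transform is holomorphic in the interior of its region of absolute
convergence. -/
lemma differentiableOn_integral_exp {Ω : Type*} [MeasurableSpace Ω] {μ : Measure Ω} {X : Ω → ℝ}
    (hX : Measurable X) {g : Ω → ℂ} (hg : AEStronglyMeasurable g μ) {s₀ : ℝ}
    (h : ∀ s : ℝ, s₀ < s → Integrable (fun ω => Real.exp (s * X ω) * ‖g ω‖) μ) :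
    DifferentiableOn ℂ (fun z : ℂ => ∫ ω, Complex.exp (z * X ω) * g ω ∂μ) {z | s₀ < z.re} := by
  intro z₀ hz₀
  change s₀ < z₀.re at hz₀
  set ε := (z₀.re - s₀) / 4 with hε
  have hε0 : 0 < ε := by rw [hε]; linarith
  have hmeas : ∀ z : ℂ, AEStronglyMeasurable (fun ω => Complex.exp (z * X ω) * g ω) μ := fun z =>
    ((Complex.measurable_ofReal.comp hX).const_mul z).cexp.aestronglyMeasurable.mul hg
  have hnorm : ∀ (z : ℂ) ω, ‖Complex.exp (z * X ω) * g ω‖ = Real.exp (z.re * X ω) * ‖g ω‖ := by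
    intro z ω
    rw [norm_mul, Complex.norm_exp]
    simp
  have key := hasDerivAt_integral_of_dominated_loc_of_deriv_le (𝕜 := ℂ) (μ := μ)
    (F := fun z ω => Complex.exp (z * X ω) * g ω)
    (F' := fun z ω => (X ω : ℂ) * (Complex.exp (z * X ω) * g ω))
    (bound := fun ω => (1 / ε) * (Real.exp ((z₀.re + 2 * ε) * X ω) * ‖g ω‖ +
      Real.exp ((z₀.re - 2 * ε) * X ω) * ‖g ω‖)) (x₀ := z₀)
    (Metric.ball_mem_nhds z₀ hε0) (Eventually.of_forall hmeas) ?_ ?_ ?_ ?_ ?_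
  · exact key.2.differentiableAt.differentiableWithinAt
  · refine (integrable_norm_iff (hmeas z₀)).1 ?_
    simp only [hnorm]
    exact h _ hz₀
  · exact (Complex.measurable_ofReal.comp hX).aestronglyMeasurable.mul (hmeas z₀)
  · refine Eventually.of_forall fun ω z hz => ?_
    rw [norm_mul, hnorm, Complex.norm_real, Real.norm_eq_abs, ← add_mul, ← mul_assoc, ← mul_assoc]
    refine mul_le_mul_of_nonneg_right ?_ (norm_nonneg _)
    have hre : |z.re - z₀.re| ≤ ε := by
      have := Complex.abs_re_le_norm (z - z₀)
      rw [Metric.mem_ball, dist_eq_norm] at hz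
      simpa using this.trans hz.le
    have h1 : |X ω| ≤ (1 / ε) * Real.exp (ε * |X ω|) := by
      have := Real.add_one_le_exp (ε * |X ω|)
      rw [one_div, ← div_eq_inv_mul, le_div_iff₀ hε0]
      linarith
    have h2 : Real.exp (z.re * X ω) ≤ Real.exp (z₀.re * X ω + ε * |X ω|) := by
      apply Real.exp_le_exp.2
      have : (z.re - z₀.re) * X ω ≤ ε * |X ω| :=
        (le_abs_self _).trans (by rw [abs_mul]; gcongr)
      linarith
    calc |X ω| * Real.exp (z.re * X ω)
        ≤ ((1 / ε) * Real.exp (ε * |X ω|)) * Real.exp (z₀.re * X ω + ε * |X ω|) := by gcongr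
      _ = (1 / ε) * Real.exp (z₀.re * X ω + 2 * ε * |X ω|) := by
          rw [mul_assoc, ← Real.exp_add]; ring_nf
      _ ≤ _ := by
          gcongr
          rcases abs_cases (X ω) with ⟨hx, _⟩ | ⟨hx, _⟩ <;> rw [hx]
          · rw [show z₀.re * X ω + 2 * ε * X ω = (z₀.re + 2 * ε) * X ω by ring]
            linarith [Real.exp_pos ((z₀.re - 2 * ε) * X ω)]
          · rw [show z₀.re * X ω + 2 * ε * -X ω = (z₀.re - 2 * ε) * X ω by ring]
            linarith [Real.exp_pos ((z₀.re + 2 * ε) * X ω)]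
  · refine Integrable.const_mul (Integrable.add (h _ ?_) (h _ ?_)) _
    · linarith
    · rw [hε]; linarith
  · refine Eventually.of_forall fun ω z _ => ?_
    have h1 : HasDerivAt (fun z : ℂ => z * (X ω : ℂ)) (X ω : ℂ) z := by
      simpa using (hasDerivAt_id z).mul_const (X ω : ℂ)
    have := (h1.cexp).mul_const (g ω)
    refine this.congr_deriv ?_
    ring

lemma norm_phase_le (n : ℕ) (β : ℂ) :
    ∀ᵐ θ ∂torus n, ‖phase β θ‖ ≤ Real.exp (Real.pi * |β.im|) ^ n := by
  have hmem : ∀ᵐ θ ∂torus n, θ ∈ Set.univ.pi (fun _ : Fin n => Set.Ioc (0 : ℝ) (2 * Real.pi)) := by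
    rw [torus_eq_restrict]
    exact ae_restrict_mem (MeasurableSet.univ_pi fun _ => measurableSet_Ioc)
  filter_upwards [hmem] with θ hθ
  rw [phase, norm_prod]
  refine (Finset.prod_le_prod (fun _ _ => norm_nonneg _)
    (g := fun _ => Real.exp (Real.pi * |β.im|)) fun j _ => ?_).trans (by simp)
  rw [Complex.norm_exp]
  apply Real.exp_le_exp.2
  have h := hθ j (Set.mem_univ j)
  have h1 : |θ j - Real.pi| ≤ Real.pi := abs_le.2 ⟨by linarith [h.1], by linarith [h.2]⟩
  have h2 : (Complex.I * ((θ j - Real.pi : ℝ) : ℂ) * β).re = -((θ j - Real.pi) * β.im) := by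
    simp only [Complex.mul_re, Complex.mul_im, Complex.I_re, Complex.I_im, Complex.ofReal_re,
      Complex.ofReal_im]
    ring
  rw [h2]
  refine (neg_le_abs _).trans ?_
  rw [abs_mul]
  gcongr

lemma integrable_norm_exp {n : ℕ} {α γ : ℝ} (β : ℂ) (h : Dom n α γ) :
    Integrable (fun θ : Fin n → ℝ => Real.exp (γ * logV θ) *
      (Real.exp (α * logW θ) * ‖phase β θ‖)) (torus n) := by
  refine ((integrable_real h).mul_const (Real.exp (Real.pi * |β.im|) ^ n)).mono' ?_ ?_
  · exact (((measurable_logV n).const_mul _).exp.mul (((measurable_logW n).const_mul _).exp.mul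
      (continuous_phase n β).measurable.norm)).aestronglyMeasurable
  · filter_upwards [norm_phase_le n β] with θ hθ
    rw [Real.norm_eq_abs, abs_of_nonneg (by positivity), Real.exp_add, ← mul_assoc]
    gcongr

lemma integrable_dens {n : ℕ} {α β γ : ℂ} (h : Dom n α.re γ.re) :
    Integrable (fun θ : Fin n → ℝ => dens α β γ θ) (torus n) := by
  refine Integrable.congr ?_ (dens_ae_eq_exp n α β γ).symm
  refine (integrable_norm_iff ?_).1 ?_
  · exact (((Complex.measurable_ofReal.comp (measurable_logV n)).const_mul _).cexp.mul
      ((((Complex.measurable_ofReal.comp (measurable_logW n)).const_mul _).cexp).mul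
      (continuous_phase n β).measurable)).aestronglyMeasurable
  · refine (integrable_norm_exp β h).congr (Eventually.of_forall fun θ => ?_)
    simp [Complex.norm_exp]

lemma differentiableOn_J_γ (n : ℕ) (α β : ℂ) {s₀ : ℝ} (h : ∀ s, s₀ < s → Dom n α.re s) :
    DifferentiableOn ℂ (fun γ => J n α β γ) {z | s₀ < z.re} := by
  have : (fun γ => J n α β γ) = fun γ : ℂ => ∫ θ : Fin n → ℝ, Complex.exp (γ * logV θ) *
      (Complex.exp (α * logW θ) * phase β θ) ∂torus n :=
    funext fun γ => integral_congr_ae (dens_ae_eq_exp n α β γ)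
  rw [this]
  refine differentiableOn_integral_exp (measurable_logV n) ?_ fun s hs => ?_
  · exact (((Complex.measurable_ofReal.comp (measurable_logW n)).const_mul _).cexp.mul
      (continuous_phase n β).measurable).aestronglyMeasurable
  · refine (integrable_norm_exp β (h s hs)).congr (Eventually.of_forall fun θ => ?_)
    simp [Complex.norm_exp]

lemma differentiableOn_J_α (n : ℕ) (β γ : ℂ) {s₀ : ℝ} (h : ∀ s, s₀ < s → Dom n s γ.re) :
    DifferentiableOn ℂ (fun α => J n α β γ) {z | s₀ < z.re} := by
  have : (fun α => J n α β γ) = fun α : ℂ => ∫ θ : Fin n → ℝ, Complex.exp (α * logW θ) *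
      (Complex.exp (γ * logV θ) * phase β θ) ∂torus n :=
    funext fun α => integral_congr_ae ((dens_ae_eq_exp n α β γ).trans
      (Eventually.of_forall fun θ => mul_left_comm _ _ _))
  rw [this]
  refine differentiableOn_integral_exp (measurable_logW n) ?_ fun s hs => ?_
  · exact (((Complex.measurable_ofReal.comp (measurable_logV n)).const_mul _).cexp.mul
      (continuous_phase n β).measurable).aestronglyMeasurable
  · refine (integrable_norm_exp β (h s hs)).congr (Eventually.of_forall fun θ => ?_)
    simp [Complex.norm_exp]
    ring

/-- Two holomorphic functions on a right half-plane that agree for large real arguments agree. -/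
lemma eqOn_halfPlane {f g : ℂ → ℂ} {s₀ R : ℝ} (hf : DifferentiableOn ℂ f {z | s₀ < z.re})
    (hg : DifferentiableOn ℂ g {z | s₀ < z.re}) (h : ∀ x : ℝ, R < x → f x = g x) {z : ℂ}
    (hz : s₀ < z.re) : f z = g z := by
  have ho : IsOpen {z : ℂ | s₀ < z.re} := isOpen_lt continuous_const Complex.continuous_re
  set x₀ : ℝ := max s₀ R + 1
  have hx₀ : (x₀ : ℂ) ∈ {z : ℂ | s₀ < z.re} := by
    simpa [x₀] using (le_max_left s₀ R).trans_lt (lt_add_one _)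
  refine (hf.analyticOnNhd ho).eqOn_of_preconnected_of_frequently_eq (hg.analyticOnNhd ho)
    (convex_halfSpace_re_gt s₀).isPreconnected hx₀ ?_ hz
  have ht : Tendsto (fun x : ℝ => (x : ℂ)) (𝓝[>] x₀) (𝓝[≠] (x₀ : ℂ)) := by
    refine tendsto_nhdsWithin_iff.2 ⟨?_, ?_⟩
    · exact (Complex.continuous_ofReal.tendsto x₀).mono_left nhdsWithin_le_nhds
    · filter_upwards [self_mem_nhdsWithin] with x hx
      have : x₀ < x := hx
      simpa using this.ne'
  refine ht.frequently (Eventually.frequently ?_)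
  filter_upwards [self_mem_nhdsWithin] with x hx
  have h1 : x₀ < x := hx
  have h2 : R < x₀ := (le_max_right s₀ R).trans_lt (lt_add_one _)
  exact h x (h2.trans h1)

/-! ### Integration by parts and logarithmic derivatives -/

/-- If the partial derivative in direction `i` of a continuous function that vanishes on the two
faces `θ_i = 0` and `θ_i = 2π` is integrable, then its integral vanishes. The derivative may fail
to exist where `e^{iθ_i}` meets `1` or another `e^{iθ_k}`. -/
lemma integral_partial_eq_zero {n : ℕ} (i : Fin (n + 1)) (h h' : (Fin (n + 1) → ℝ) → ℂ)
    (hint : Integrable h' (torus (n + 1))) (hc : Continuous h)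
    (hd : ∀ θ, chord (θ i) ≠ 0 → (∀ k, k ≠ i → chord (θ i - θ k) ≠ 0) →
      HasDerivAt (fun x => h (Function.update θ i x)) (h' θ) (θ i))
    (h0 : ∀ θ, chord (θ i) = 0 → h θ = 0) : ∫ θ, h' θ ∂torus (n + 1) = 0 := by
  rw [integral_torus_split i]
  have hint' := (integrable_torus_iff i h').1 hint
  rw [integral_prod_symm _ hint']
  rw [← integral_zero (Fin n → ℝ) ℂ (μ := torus n)]
  refine integral_congr_ae ?_
  filter_upwards [hint'.prod_left_ae] with y hy
  rw [integral_circ]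
  set s : Set ℝ := {x | chord (x - 0) = 0} ∪ ⋃ l, {x | chord (x - y l) = 0} with hs
  have hsc : s.Countable :=
    (countable_chord_zero 0).union (Set.countable_iUnion fun l => countable_chord_zero (y l))
  have := integral_eq_of_hasDerivAt_off_countable
    (fun x => h (i.insertNth x y)) (fun x => h' (i.insertNth x y))
    (a := 0) (b := 2 * Real.pi) hsc ?_ ?_ ((integrable_circ_iff _).1 hy)
  · rw [this, h0, h0, sub_zero]
    · simp [chord]
    · simp [chord]
  · exact (hc.comp ((continuous_id.finInsertNth i continuous_const))).continuousOn
  · rintro x ⟨-, hx⟩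
    simp only [hs, Set.mem_union, Set.mem_iUnion, not_or, not_exists] at hx
    have hx1 : chord x ≠ 0 := by simpa using hx.1
    have := hd (i.insertNth x y) (by simpa using hx1) ?_
    · simpa using this
    · intro k hk
      obtain ⟨l, rfl⟩ := Fin.exists_succAbove_eq hk
      simpa using hx.2 l

/-- `cot (x / 2)`, with the value `0` where the sine vanishes. -/
noncomputable def ct (x : ℝ) : ℝ := Real.cos (x / 2) / Real.sin (x / 2)

lemma ct_neg (x : ℝ) : ct (-x) = -ct x := by
  simp [ct, neg_div, div_neg]

lemma ct_sub_comm (x y : ℝ) : ct (x - y) = -ct (y - x) := by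
  rw [← ct_neg, neg_sub]

lemma measurable_ct : Measurable ct := by
  unfold ct; fun_prop

lemma sin_ne_zero_of_chord {x : ℝ} (hx : chord x ≠ 0) : Real.sin (x / 2) ≠ 0 := by
  intro h; exact hx (by simp [chord, h])

lemma hasDerivAt_cpw (c : ℂ) {x : ℝ} (hx : chord x ≠ 0) :
    HasDerivAt (cpw c) (c / 2 * ct x * cpw c x) x := by
  have hs := sin_ne_zero_of_chord hx
  have h1 : HasDerivAt (fun y : ℝ => 2 * Real.sin (y / 2)) (Real.cos (x / 2)) x := by
    have := ((hasDerivAt_id x).div_const 2).sin.const_mul 2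
    refine this.congr_deriv ?_
    simp only [id]
    ring
  have h2 : HasDerivAt (fun y : ℝ => Real.log (chord y)) (ct x / 2) x := by
    have := h1.log (by simpa using hs)
    simp only [chord, Real.log_abs]
    refine this.congr_deriv ?_
    rw [ct]
    field_simp
  have h3 : HasDerivAt (fun y : ℝ => Complex.exp (c * (Real.log (chord y) : ℝ)))
      (Complex.exp (c * (Real.log (chord x) : ℝ)) * (c * ((ct x / 2 : ℝ) : ℂ))) x :=
    ((h2.ofReal_comp).const_mul c).cexp
  have hev : cpw c =ᶠ[𝓝 x] fun y : ℝ => Complex.exp (c * (Real.log (chord y) : ℝ)) := by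
    filter_upwards [continuous_chord.continuousAt.eventually_ne hx] with y hy
    exact cpw_eq_exp c hy
  refine (h3.congr_of_eventuallyEq hev).congr_deriv ?_
  rw [cpw_eq_exp c hx]
  push_cast
  ring

lemma hasDerivAt_prod_log {ι : Type*} (s : Finset ι) (f : ι → ℝ → ℂ) (c : ι → ℂ) (x : ℝ)
    (h : ∀ i ∈ s, HasDerivAt (f i) (c i * f i x) x) :
    HasDerivAt (fun y => ∏ i ∈ s, f i y) ((∑ i ∈ s, c i) * ∏ i ∈ s, f i x) x := by
  classical
  induction s using Finset.induction_on with
  | empty => simpa using hasDerivAt_const x (1 : ℂ)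
  | insert a s ha ih =>
    simp only [Finset.prod_insert ha, Finset.sum_insert ha]
    have h1 := h a (Finset.mem_insert_self a s)
    have h2 := ih fun i hi => h i (Finset.mem_insert_of_mem hi)
    refine (h1.mul h2).congr_deriv ?_
    ring

lemma hasDerivAt_update_apply {n : ℕ} (θ : Fin n → ℝ) (i j : Fin n) (x : ℝ) :
    HasDerivAt (fun y => Function.update θ i y j) (if j = i then 1 else 0) x := by
  by_cases h : j = i
  · subst h; simpa using hasDerivAt_id' x
  · simpa [Function.update_of_ne h, h] using hasDerivAt_const x (θ j)

lemma hasDerivAt_vand {n : ℕ} (γ : ℂ) (i : Fin n) (θ : Fin n → ℝ)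
    (hθ : ∀ k, k ≠ i → chord (θ i - θ k) ≠ 0) :
    HasDerivAt (fun x => vand γ (Function.update θ i x))
      ((γ * ∑ k ∈ {i}ᶜ, (ct (θ i - θ k) : ℂ)) * vand γ θ) (θ i) := by
  have hu : Function.update θ i (θ i) = θ := Function.update_eq_self i θ
  have key : HasDerivAt (fun x => vand γ (Function.update θ i x))
      ((∑ j, ∑ k ∈ {j}ᶜ, γ / 2 * ct (θ j - θ k) *
        ((if j = i then 1 else 0) - (if k = i then 1 else 0))) * vand γ θ) (θ i) := by
    unfold vand
    have := hasDerivAt_prod_log Finset.univ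
      (fun j x => ∏ k ∈ {j}ᶜ, cpw γ (Function.update θ i x j - Function.update θ i x k))
      (fun j => ∑ k ∈ {j}ᶜ, γ / 2 * ct (θ j - θ k) *
        ((if j = i then 1 else 0) - (if k = i then 1 else 0))) (θ i) ?_
    · simpa only [hu] using this
    intro j _
    refine hasDerivAt_prod_log _
      (fun k x => cpw γ (Function.update θ i x j - Function.update θ i x k)) _ _ ?_
    intro k hk
    have hjk : k ≠ j := by simpa using hk
    simp only [hu]
    by_cases hij : j = i ∨ k = i
    · have hne : chord (θ j - θ k) ≠ 0 := by
        rcases hij with rfl | rfl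
        · exact hθ k hjk
        · rw [chord_sub_comm]; exact hθ j hjk.symm
      have h1 : HasDerivAt (fun y => Function.update θ i y j - Function.update θ i y k)
          ((if j = i then 1 else 0) - (if k = i then 1 else 0)) (θ i) :=
        (hasDerivAt_update_apply θ i j _).sub (hasDerivAt_update_apply θ i k _)
      have h2 : HasDerivAt (cpw γ) (γ / 2 * ct (θ j - θ k) * cpw γ (θ j - θ k))
          (Function.update θ i (θ i) j - Function.update θ i (θ i) k) := by
        rw [hu]; exact hasDerivAt_cpw γ hne
      refine (h2.scomp (θ i) h1).congr_deriv ?_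
      rw [Complex.real_smul]
      split_ifs <;> push_cast <;> ring
    · push Not at hij
      simpa [Function.update_of_ne hij.1, Function.update_of_ne hij.2, hij.1, hij.2] using
        hasDerivAt_const (θ i) (cpw γ (θ j - θ k))
  refine key.congr_deriv ?_
  congr 1
  simp only [mul_sub, Finset.sum_sub_distrib]
  have e1 : ∑ j, ∑ k ∈ {j}ᶜ, γ / 2 * (ct (θ j - θ k) : ℂ) * (if j = i then 1 else 0) =
      γ / 2 * ∑ k ∈ {i}ᶜ, (ct (θ i - θ k) : ℂ) := by
    rw [Finset.sum_eq_single i]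
    · simp [Finset.mul_sum]
    · intro j _ hj; simp [hj]
    · simp
  have e2 : ∑ j, ∑ k ∈ {j}ᶜ, γ / 2 * (ct (θ j - θ k) : ℂ) * (if k = i then 1 else 0) =
      -(γ / 2 * ∑ k ∈ {i}ᶜ, (ct (θ i - θ k) : ℂ)) := by
    rw [Finset.mul_sum, ← Finset.sum_neg_distrib]
    have : ∀ j : Fin n, ∑ k ∈ {j}ᶜ, γ / 2 * (ct (θ j - θ k) : ℂ) * (if k = i then 1 else 0) =
        if j ∈ ({i}ᶜ : Finset (Fin n)) then -(γ / 2 * (ct (θ i - θ j) : ℂ)) else 0 := by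
      intro j
      simp only [mul_ite, mul_one, mul_zero, Finset.sum_ite_eq', Finset.mem_compl,
        Finset.mem_singleton]
      by_cases hj : j = i
      · simp [hj]
      · rw [if_pos (Ne.symm hj), if_pos hj, ct_sub_comm]
        push_cast; ring
    simp only [this]
    rw [Finset.sum_ite_mem, Finset.univ_inter]
  rw [e1, e2]
  ring

lemma continuous_wt {α : ℂ} (hα : 0 < α.re) (β : ℂ) : Continuous (wt α β) := by
  unfold wt
  exact Continuous.mul (by fun_prop) (continuous_cpw (by simpa using hα))

lemma continuous_vand {n : ℕ} {γ : ℂ} (hγ : 0 < γ.re) : Continuous (vand (n := n) γ) := by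
  unfold vand
  refine continuous_finsetProd _ fun j _ => continuous_finsetProd _ fun k _ => ?_
  exact (continuous_cpw hγ).comp (by fun_prop)

lemma continuous_dens {n : ℕ} {α γ : ℂ} (hα : 0 < α.re) (β : ℂ) (hγ : 0 < γ.re) :
    Continuous (dens (n := n) α β γ) := by
  unfold dens
  refine (continuous_vand hγ).mul (continuous_finsetProd _ fun j _ => ?_)
  exact (continuous_wt hα β).comp (by fun_prop)

lemma wt_zero_of_chord {α : ℂ} (hα : 0 < α.re) (β : ℂ) {x : ℝ} (hx : chord x = 0) :
    wt α β x = 0 := by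
  rw [wt, cpw_zero_of_chord (by simpa using hα) hx, mul_zero]

lemma dens_zero_of_chord {n : ℕ} {α : ℂ} (hα : 0 < α.re) (β γ : ℂ) {θ : Fin n → ℝ} (i : Fin n)
    (hx : chord (θ i) = 0) : dens α β γ θ = 0 := by
  rw [dens, Finset.prod_eq_zero (Finset.mem_univ i) (wt_zero_of_chord hα β hx), mul_zero]

lemma dens_zero_of_chord_sub {n : ℕ} (α β : ℂ) {γ : ℂ} (hγ : 0 < γ.re) {θ : Fin n → ℝ}
    {i k : Fin n} (hik : k ≠ i) (hx : chord (θ i - θ k) = 0) : dens α β γ θ = 0 := by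
  rw [dens, vand, Finset.prod_eq_zero (Finset.mem_univ i), zero_mul]
  exact Finset.prod_eq_zero (i := k) (by simpa using hik) (cpw_zero_of_chord hγ hx)

lemma exp_half_sq (x : ℝ) : Complex.exp (Complex.I * x) =
    (Real.cos (x / 2) + Real.sin (x / 2) * Complex.I) ^ 2 := by
  have : Complex.I * (x : ℂ) = ((2 : ℕ) : ℂ) * (((x / 2 : ℝ) : ℂ) * Complex.I) := by
    push_cast; ring
  rw [this, Complex.exp_nat_mul, Complex.exp_mul_I, Complex.ofReal_cos, Complex.ofReal_sin]

lemma cos_sq_add (x : ℝ) : (Real.cos (x / 2) : ℂ) ^ 2 + (Real.sin (x / 2) : ℂ) ^ 2 = 1 := by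
  have := Real.cos_sq_add_sin_sq (x / 2)
  exact_mod_cast this

/-- `(1 - t) cot (x / 2) = -i (1 + t)` for `t = e^{ix}`. -/
lemma one_sub_exp_mul_ct {x : ℝ} (hx : chord x ≠ 0) :
    (1 - Complex.exp (Complex.I * x)) * ct x = -Complex.I * (1 + Complex.exp (Complex.I * x)) := by
  have hs : (Real.sin (x / 2) : ℂ) ≠ 0 := by exact_mod_cast sin_ne_zero_of_chord hx
  have h := cos_sq_add x
  rw [exp_half_sq, ct, Complex.ofReal_div]
  set c := (Real.cos (x / 2) : ℂ)
  set s := (Real.sin (x / 2) : ℂ)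
  have hI : Complex.I ^ 2 = -1 := Complex.I_sq
  field_simp
  linear_combination (-(c + s * Complex.I)) * h + (c + s * Complex.I) * s ^ 2 * hI

/-! ### Aomoto's averages: bounds and symmetry -/

/-- The point `e^{ix}` of the unit circle. -/
noncomputable def pt (x : ℝ) : ℂ := Complex.exp (Complex.I * x)

lemma continuous_pt : Continuous pt := by unfold pt; fun_prop

lemma norm_pt (x : ℝ) : ‖pt x‖ = 1 := Complex.norm_exp_I_mul_ofReal x

lemma hasDerivAt_pt (x : ℝ) : HasDerivAt pt (Complex.I * pt x) x := by
  have h : HasDerivAt (fun y : ℝ => Complex.I * (y : ℂ)) Complex.I x := by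
    simpa using (Complex.ofRealCLM.hasDerivAt (x := x)).const_mul Complex.I
  exact h.cexp.congr_deriv (mul_comm _ _)

lemma hasDerivAt_one_sub_pt_mul_wt (α β : ℂ) {x : ℝ} (hx : chord x ≠ 0) :
    HasDerivAt (fun y => (1 - pt y) * wt α β y)
      (-Complex.I * ((1 + α + β) * pt x + (α - β)) * wt α β x) x := by
  have h1 : HasDerivAt (fun y : ℝ => Complex.I * ((y - Real.pi : ℝ) : ℂ) * β)
      (Complex.I * β) x := by
    have := (((hasDerivAt_id x).sub_const Real.pi).ofReal_comp.const_mul Complex.I).mul_const β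
    simpa using this
  have h2 := h1.cexp.mul (hasDerivAt_cpw (2 * α) hx)
  have h3 := ((hasDerivAt_pt x).const_sub 1).mul h2
  have hct := one_sub_exp_mul_ct hx
  change (1 - pt x) * ct x = -Complex.I * (1 + pt x) at hct
  refine h3.congr_deriv ?_
  simp only [Pi.mul_apply]
  unfold wt
  set E := Complex.exp (Complex.I * ((x - Real.pi : ℝ) : ℂ) * β)
  set C := cpw (2 * α) x
  linear_combination (α * E * C) * hct

/-- The pairing of `dens` with a product of factors `1 - e^{iθ_s}`, `s ∈ S`, as in Aomoto's proof of
the Selberg integral. -/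
noncomputable def aomoto {n : ℕ} (α β γ : ℂ) (S : Finset (Fin n)) : ℂ :=
  ∫ θ, (∏ s ∈ S, (1 - pt (θ s))) * dens α β γ θ ∂torus n

lemma norm_pair_le {γ : ℂ} (hγ : 1 ≤ γ.re) (x : ℝ) : ‖cpw γ x * ct x‖ ≤ 2 ^ γ.re := by
  by_cases hx : chord x = 0
  · rw [cpw_zero_of_chord (by linarith) hx, zero_mul, norm_zero]; positivity
  have hpos : 0 < chord x := lt_of_le_of_ne (chord_nonneg x) (Ne.symm hx)
  have hs := sin_ne_zero_of_chord hx
  have h1 : |ct x| ≤ 2 / chord x := by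
    rw [ct, abs_div, chord, abs_mul, abs_two]
    rw [div_le_div_iff₀ (abs_pos.2 hs) (by positivity)]
    nlinarith [Real.abs_cos_le_one (x / 2), abs_pos.2 hs]
  rw [norm_mul, cpw, Complex.norm_cpow_eq_rpow_re_of_pos hpos, Complex.norm_real, Real.norm_eq_abs]
  calc chord x ^ γ.re * |ct x| ≤ chord x ^ γ.re * (2 / chord x) := by gcongr
    _ = chord x ^ (γ.re - 1) * 2 := by rw [Real.rpow_sub_one hx]; field_simp
    _ ≤ 2 ^ (γ.re - 1) * 2 :=
      mul_le_mul_of_nonneg_right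
        (Real.rpow_le_rpow hpos.le (chord_le_two x) (by linarith)) (by norm_num)
    _ = 2 ^ γ.re := by rw [Real.rpow_sub_one (by norm_num)]; field_simp

lemma norm_prod_le_pow {ι : Type*} (s : Finset ι) (f : ι → ℂ) {M : ℝ}
    (h : ∀ i ∈ s, ‖f i‖ ≤ M) : ‖∏ i ∈ s, f i‖ ≤ M ^ s.card := by
  rw [norm_prod]
  refine (Finset.prod_le_prod (fun _ _ => norm_nonneg _) h).trans (by simp)

/-- For `Re γ ≥ 1` the zero of `vand` on the diagonal absorbs the pole of the cotangent. -/
lemma norm_vand_mul_ct_le {n : ℕ} {γ : ℂ} (hγ : 1 ≤ γ.re) (i k : Fin n) (hik : k ≠ i) :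
    ∃ M : ℝ, ∀ θ : Fin n → ℝ, ‖vand γ θ * ct (θ i - θ k)‖ ≤ M := by
  have hγ0 : 0 < γ.re := by linarith
  set R : ℝ := 2 ^ γ.re with hR
  refine ⟨R * R ^ (({i}ᶜ : Finset (Fin n)).erase k).card *
    ∏ j ∈ Finset.univ.erase i, R ^ ({j}ᶜ : Finset (Fin n)).card, fun θ => ?_⟩
  have hk : k ∈ ({i}ᶜ : Finset (Fin n)) := by simpa using hik
  rw [vand, ← Finset.mul_prod_erase _ _ (Finset.mem_univ i), ← Finset.mul_prod_erase _ _ hk]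
  rw [show ∀ a b c d : ℂ, a * b * c * d = (a * d) * b * c from fun a b c d => by ring]
  rw [norm_mul, norm_mul]
  gcongr
  · exact norm_pair_le hγ _
  · exact norm_prod_le_pow _ _ fun l _ => norm_cpw_le hγ0 _
  · rw [norm_prod]
    exact Finset.prod_le_prod (fun _ _ => norm_nonneg _) fun j _ =>
      norm_prod_le_pow _ _ fun l _ => norm_cpw_le hγ0 _

lemma dom_of_one_le (n : ℕ) {α γ : ℝ} (hα : 0 < α) (hγ : 1 ≤ γ) : Dom (n + 1) α γ := by
  have h : 0 ≤ (n : ℝ) * γ := by positivity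
  refine ⟨by linarith, by positivity, ?_⟩
  push_cast
  nlinarith

lemma integrable_dens' {n : ℕ} {α γ : ℂ} (hα : 0 < α.re) (β : ℂ) (hγ : 1 ≤ γ.re) :
    Integrable (fun θ : Fin (n + 1) → ℝ => dens α β γ θ) (torus (n + 1)) :=
  integrable_dens (dom_of_one_le n hα hγ)

lemma measurable_dens (n : ℕ) (α β γ : ℂ) : Measurable (dens (n := n) α β γ) := by
  unfold dens vand wt
  refine Measurable.mul (Finset.measurable_prod _ fun j _ => Finset.measurable_prod _ fun k _ => ?_)
    (Finset.measurable_prod _ fun j _ => Measurable.mul ?_ ?_)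
  · exact (measurable_cpw γ).comp (by fun_prop)
  · fun_prop
  · exact (measurable_cpw _).comp (by fun_prop)

lemma integrable_dens_ct {n : ℕ} {α γ : ℂ} (hα : 0 < α.re) (β : ℂ) (hγ : 1 ≤ γ.re) (i k : Fin n)
    (hik : k ≠ i) :
    Integrable (fun θ : Fin n → ℝ => dens α β γ θ * ct (θ i - θ k)) (torus n) := by
  obtain ⟨M, hM⟩ := norm_vand_mul_ct_le hγ i k hik
  have hw : Integrable (fun θ : Fin n → ℝ => ∏ j, wt α β (θ j)) (torus n) := by
    refine Integrable.fintype_prod (f := fun _ : Fin n => wt α β) fun _ => ?_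
    rw [integrable_circ_iff]
    exact (continuous_wt hα β).intervalIntegrable _ _
  have hmeas : Measurable fun θ : Fin n → ℝ => vand γ θ * (ct (θ i - θ k) : ℂ) := by
    refine (continuous_vand (by linarith)).measurable.mul ?_
    exact Complex.measurable_ofReal.comp (measurable_ct.comp (by fun_prop))
  refine (hw.bdd_mul hmeas.aestronglyMeasurable (Eventually.of_forall hM)).congr
    (Eventually.of_forall fun θ => ?_)
  simp only [dens]
  ring

lemma continuous_prod_pt {n : ℕ} (S : Finset (Fin n)) :
    Continuous fun θ : Fin n → ℝ => ∏ s ∈ S, (1 - pt (θ s)) :=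
  continuous_finsetProd _ fun s _ =>
    continuous_const.sub (continuous_pt.comp (continuous_apply s))

lemma norm_one_sub_pt (x : ℝ) : ‖1 - pt x‖ ≤ 2 := by
  rw [pt, norm_exp_sub_one]; exact chord_le_two x

lemma integrable_prod_pt_mul {n : ℕ} (S : Finset (Fin n)) {f : (Fin n → ℝ) → ℂ}
    (hf : Integrable f (torus n)) :
    Integrable (fun θ => (∏ s ∈ S, (1 - pt (θ s))) * f θ) (torus n) :=
  hf.bdd_mul (continuous_prod_pt S).measurable.aestronglyMeasurable
    (Eventually.of_forall fun _ => norm_prod_le_pow _ _ fun _ _ => norm_one_sub_pt _)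

/-- The torus measure is invariant under permutations of the coordinates. -/
lemma integral_comp_swap {n : ℕ} (σ : Equiv.Perm (Fin n)) (f : (Fin n → ℝ) → ℂ) :
    ∫ θ, f (fun j => θ (σ j)) ∂torus n = ∫ θ, f θ ∂torus n := by
  have h := measurePreserving_piCongrLeft (fun _ : Fin n => circ) σ.symm
  have := h.integral_comp (MeasurableEquiv.measurableEmbedding _) f
  rw [torus, ← this]
  refine integral_congr_ae (Eventually.of_forall fun θ => ?_)
  simp only
  congr 1
  funext j
  have := Equiv.piCongrLeft_apply_apply (P := fun _ : Fin n => ℝ) σ.symm θ (σ j)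
  simp only [Equiv.symm_apply_apply] at this
  exact this.symm

lemma vand_comp_perm {n : ℕ} (γ : ℂ) (σ : Equiv.Perm (Fin n)) (θ : Fin n → ℝ) :
    vand γ (fun j => θ (σ j)) = vand γ θ := by
  unfold vand
  rw [← Equiv.prod_comp σ (fun j => ∏ k ∈ {j}ᶜ, cpw γ (θ j - θ k))]
  refine Finset.prod_congr rfl fun j _ => ?_
  refine Finset.prod_equiv σ ?_ fun _ _ => rfl
  intro k
  simp

lemma dens_comp_perm {n : ℕ} (α β γ : ℂ) (σ : Equiv.Perm (Fin n)) (θ : Fin n → ℝ) :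
    dens α β γ (fun j => θ (σ j)) = dens α β γ θ := by
  unfold dens
  rw [vand_comp_perm, Equiv.prod_comp σ (fun j => wt α β (θ j))]

/-! ### The contiguity relation -/

lemma integral_lin_comb {X : Type*} [MeasurableSpace X] {μ : Measure X} {f g h : X → ℂ}
    (hf : Integrable f μ) (hg : Integrable g μ) (hh : Integrable h μ) (a b c : ℂ) :
    ∫ x, (a * f x + b * g x + c * h x) ∂μ =
      a * ∫ x, f x ∂μ + b * ∫ x, g x ∂μ + c * ∫ x, h x ∂μ := by
  have hfg : Integrable (fun x => a * f x + b * g x) μ := (hf.const_mul a).add (hg.const_mul b)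
  rw [integral_add hfg (hh.const_mul c), integral_add (hf.const_mul a) (hg.const_mul b),
    integral_const_mul, integral_const_mul, integral_const_mul]

lemma aomoto_insert {n : ℕ} (α β γ : ℂ) {S : Finset (Fin n)} {i : Fin n} (hi : i ∉ S) :
    aomoto α β γ (insert i S) =
      ∫ θ, (∏ s ∈ S, (1 - pt (θ s))) * ((1 - pt (θ i)) * dens α β γ θ) ∂torus n := by
  unfold aomoto
  congr 1
  funext θ
  rw [Finset.prod_insert hi]
  ring

lemma prod_comp_swap_of_notMem {n : ℕ} {S : Finset (Fin n)} {i k : Fin n} (hi : i ∉ S) (hk : k ∉ S)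
    (θ : Fin n → ℝ) :
    ∏ s ∈ S, (1 - pt (θ (Equiv.swap i k s))) = ∏ s ∈ S, (1 - pt (θ s)) := by
  refine Finset.prod_congr rfl fun s hs => ?_
  have h1 : s ≠ i := fun h => hi (h ▸ hs)
  have h2 : s ≠ k := fun h => hk (h ▸ hs)
  rw [Equiv.swap_apply_of_ne_of_ne h1 h2]

lemma aomoto_insert_comm {n : ℕ} (α β γ : ℂ) {S : Finset (Fin n)} {i k : Fin n} (hi : i ∉ S)
    (hk : k ∉ S) : aomoto α β γ (insert k S) = aomoto α β γ (insert i S) := by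
  rw [aomoto_insert α β γ hi, aomoto_insert α β γ hk, ← integral_comp_swap (Equiv.swap i k)]
  congr 1
  funext θ
  rw [dens_comp_perm, prod_comp_swap_of_notMem hi hk]
  simp only [Equiv.swap_apply_right]

/-- The contribution of the interaction between `θ_i` and `θ_k`, for `k` in `S`, is odd under
exchanging the two variables. -/
lemma pair_integral_of_mem {n : ℕ} (α β γ : ℂ) {S : Finset (Fin n)} {i k : Fin n} (hi : i ∉ S)
    (hk : k ∈ S) :
    ∫ θ, (∏ s ∈ S, (1 - pt (θ s))) * ((1 - pt (θ i)) * (dens α β γ θ * ct (θ i - θ k)))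
      ∂torus n = 0 := by
  have key : ∀ θ : Fin n → ℝ, (∏ s ∈ S, (1 - pt (θ s))) *
      ((1 - pt (θ i)) * (dens α β γ θ * ct (θ i - θ k))) =
      (∏ s ∈ insert i S, (1 - pt (θ s))) * (dens α β γ θ * ct (θ i - θ k)) := by
    intro θ; rw [Finset.prod_insert hi]; ring
  simp only [key]
  have h := integral_comp_swap (Equiv.swap i k) (fun θ : Fin n → ℝ =>
    (∏ s ∈ insert i S, (1 - pt (θ s))) * (dens α β γ θ * ct (θ i - θ k)))
  have hp : ∀ θ : Fin n → ℝ, ∏ s ∈ insert i S, (1 - pt (θ (Equiv.swap i k s))) =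
      ∏ s ∈ insert i S, (1 - pt (θ s)) := by
    intro θ
    refine Finset.prod_equiv (Equiv.swap i k) (fun s => ?_) fun _ _ => rfl
    by_cases h1 : s = i
    · subst h1; simp [hk]
    by_cases h2 : s = k
    · subst h2; simp [hk]
    rw [Equiv.swap_apply_of_ne_of_ne h1 h2]
  simp only [dens_comp_perm, hp, Equiv.swap_apply_left, Equiv.swap_apply_right] at h
  have h2 : ∀ θ : Fin n → ℝ, (∏ s ∈ insert i S, (1 - pt (θ s))) *
      (dens α β γ θ * ct (θ k - θ i)) = -((∏ s ∈ insert i S, (1 - pt (θ s))) *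
      (dens α β γ θ * ct (θ i - θ k))) := by
    intro θ; rw [ct_sub_comm]; push_cast; ring
  simp only [h2, integral_neg] at h
  exact self_eq_neg.1 h.symm

lemma pt_sub_mul_ct {x y : ℝ} (h : chord (x - y) ≠ 0) :
    (pt y - pt x) * ct (x - y) = -Complex.I * (pt x + pt y) := by
  have h1 := one_sub_exp_mul_ct h
  have h2 : pt x = pt y * pt (x - y) := by
    unfold pt; rw [← Complex.exp_add]; congr 1; push_cast; ring
  change (1 - pt (x - y)) * _ = -Complex.I * (1 + pt (x - y)) at h1
  rw [h2]
  linear_combination pt y * h1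

/-- The contribution of the interaction between `θ_i` and `θ_k` for `k` outside `S`, evaluated by
averaging over the exchange of the two variables. -/
lemma pair_integral_of_notMem {n : ℕ} {α γ : ℂ} (hα : 0 < α.re) (β : ℂ) (hγ : 1 ≤ γ.re)
    {S : Finset (Fin (n + 1))} {i k : Fin (n + 1)} (hi : i ∉ S) (hk : k ∉ S) (hik : k ≠ i) :
    ∫ θ, (∏ s ∈ S, (1 - pt (θ s))) * ((1 - pt (θ i)) * (dens α β γ θ * ct (θ i - θ k)))
      ∂torus (n + 1) = Complex.I * (aomoto α β γ (insert i S) - aomoto α β γ S) := by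
  set B := ∫ θ, (∏ s ∈ S, (1 - pt (θ s))) * ((1 - pt (θ i)) * (dens α β γ θ * ct (θ i - θ k)))
      ∂torus (n + 1) with hB
  have hint : ∀ l : Fin (n + 1), Integrable (fun θ => (∏ s ∈ S, (1 - pt (θ s))) *
      ((1 - pt (θ l)) * (dens α β γ θ * ct (θ i - θ k)))) (torus (n + 1)) := by
    intro l
    refine integrable_prod_pt_mul S ?_
    simpa using integrable_prod_pt_mul {l} (integrable_dens_ct hα β hγ i k hik)
  have hint2 : ∀ l : Fin (n + 1), Integrable (fun θ => (∏ s ∈ S, (1 - pt (θ s))) *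
      ((1 - pt (θ l)) * dens α β γ θ)) (torus (n + 1)) := by
    intro l
    refine integrable_prod_pt_mul S ?_
    simpa using integrable_prod_pt_mul {l} (integrable_dens' hα β hγ)
  have hint3 : Integrable (fun θ => (∏ s ∈ S, (1 - pt (θ s))) * dens α β γ θ) (torus (n + 1)) :=
    integrable_prod_pt_mul S (integrable_dens' hα β hγ)
  have hswap : B = -∫ θ, (∏ s ∈ S, (1 - pt (θ s))) *
      ((1 - pt (θ k)) * (dens α β γ θ * ct (θ i - θ k))) ∂torus (n + 1) := by
    rw [hB, ← integral_comp_swap (Equiv.swap i k), ← integral_neg]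
    congr 1
    funext θ
    rw [dens_comp_perm, prod_comp_swap_of_notMem hi hk]
    simp only [Equiv.swap_apply_right, Equiv.swap_apply_left]
    rw [ct_sub_comm]
    push_cast
    ring
  have h2B : B + B = -Complex.I * (2 * aomoto α β γ S - aomoto α β γ (insert i S) -
      aomoto α β γ (insert k S)) := by
    nth_rewrite 2 [hswap]
    have e := integral_lin_comb hint3 (hint2 i) (hint2 k) 2 (-1) (-1)
    rw [← aomoto_insert α β γ hi, ← aomoto_insert α β γ hk] at e
    change _ = 2 * aomoto α β γ S + _ + _ at e
    rw [show 2 * aomoto α β γ S - aomoto α β γ (insert i S) - aomoto α β γ (insert k S) =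
      2 * aomoto α β γ S + (-1) * aomoto α β γ (insert i S) + (-1) * aomoto α β γ (insert k S) by
      ring, ← e, hB, ← sub_eq_add_neg, ← integral_sub (hint i) (hint k), ← integral_const_mul]
    congr 1
    funext θ
    by_cases hz : chord (θ i - θ k) = 0
    · simp [dens_zero_of_chord_sub α β (by linarith : 0 < γ.re) hik hz]
    · have := pt_sub_mul_ct hz
      linear_combination (∏ s ∈ S, (1 - pt (θ s))) * dens α β γ θ * this
  rw [aomoto_insert_comm α β γ hi hk] at h2B
  linear_combination h2B / 2

/-- One step of Aomoto's recursion: the integral of the `θ_i`-derivative of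
`(1 - e^{iθ_i}) ∏_{s ∈ S} (1 - e^{iθ_s})` times the density vanishes. -/
lemma aomoto_step {n : ℕ} {α γ : ℂ} (hα : 0 < α.re) (β : ℂ) (hγ : 1 ≤ γ.re)
    {S : Finset (Fin (n + 1))} {i : Fin (n + 1)} (hi : i ∉ S) :
    (1 + (α + β) + ((n : ℂ) - S.card) * γ) * aomoto α β γ (insert i S) =
      (1 + 2 * α + ((n : ℂ) - S.card) * γ) * aomoto α β γ S := by
  set P : (Fin (n + 1) → ℝ) → ℂ := fun θ => ∏ s ∈ S, (1 - pt (θ s)) with hP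
  have hγ0 : 0 < γ.re := by linarith
  have i1 : Integrable (fun θ => P θ * dens α β γ θ) (torus (n + 1)) :=
    integrable_prod_pt_mul S (integrable_dens' hα β hγ)
  have i2 : Integrable (fun θ => P θ * ((1 - pt (θ i)) * dens α β γ θ)) (torus (n + 1)) := by
    refine integrable_prod_pt_mul S ?_
    simpa using integrable_prod_pt_mul {i} (integrable_dens' hα β hγ)
  have i3 : ∀ k ∈ ({i}ᶜ : Finset (Fin (n + 1))), Integrable (fun θ => P θ * ((1 - pt (θ i)) *
      (dens α β γ θ * ct (θ i - θ k)))) (torus (n + 1)) := by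
    intro k hk
    refine integrable_prod_pt_mul S ?_
    simpa using integrable_prod_pt_mul {i} (integrable_dens_ct hα β hγ i k (by simpa using hk))
  have i3' := integrable_finsetSum _ i3
  have hzero := integral_partial_eq_zero i (fun θ => P θ * ((1 - pt (θ i)) * dens α β γ θ))
    (fun θ => -Complex.I * (1 + 2 * α) * (P θ * dens α β γ θ) +
      Complex.I * (1 + (α + β)) * (P θ * ((1 - pt (θ i)) * dens α β γ θ)) +
      γ * ∑ k ∈ {i}ᶜ, P θ * ((1 - pt (θ i)) * (dens α β γ θ * ct (θ i - θ k))))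
    (((i1.const_mul _).add (i2.const_mul _)).add (i3'.const_mul γ)) ?_ ?_ ?_
  · rw [integral_lin_comb i1 i2 i3', integral_finsetSum _ i3, ← aomoto_insert α β γ hi] at hzero
    have hsum : ∑ k ∈ {i}ᶜ, ∫ θ, P θ * ((1 - pt (θ i)) * (dens α β γ θ * ct (θ i - θ k)))
        ∂torus (n + 1) = ((n : ℂ) - S.card) *
          (Complex.I * (aomoto α β γ (insert i S) - aomoto α β γ S)) := by
      have hsub : (insert i S)ᶜ ⊆ ({i}ᶜ : Finset (Fin (n + 1))) := by
        intro k; simp; tauto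
      rw [← Finset.sum_subset hsub]
      · rw [Finset.sum_congr rfl (g := fun _ =>
          Complex.I * (aomoto α β γ (insert i S) - aomoto α β γ S))]
        · rw [Finset.sum_const, nsmul_eq_mul, Finset.card_compl, Finset.card_insert_of_notMem hi,
            Nat.cast_sub]
          · simp
          · rw [← Finset.card_insert_of_notMem hi]; exact Finset.card_le_univ _
        · intro k hk
          have hk' : k ≠ i ∧ k ∉ S := by simpa using hk
          exact pair_integral_of_notMem hα β hγ hi hk'.2 hk'.1
      · intro k hk hk'
        have h1 : k ≠ i := by simpa using hk
        have h2 : k ∈ S := by simpa [h1] using hk'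
        exact pair_integral_of_mem α β γ hi h2
    rw [hsum] at hzero
    change -Complex.I * (1 + 2 * α) * aomoto α β γ S + _ + _ = 0 at hzero
    linear_combination (-Complex.I) * hzero + ((1 + (α + β) + ((n : ℂ) - S.card) * γ) *
      aomoto α β γ (insert i S) - (1 + 2 * α + ((n : ℂ) - S.card) * γ) * aomoto α β γ S) *
      Complex.I_sq
  · exact (continuous_prod_pt S).mul ((continuous_const.sub
      (continuous_pt.comp (continuous_apply i))).mul (continuous_dens hα β hγ0))
  · intro θ h1 h2
    set Q : ℂ := ∏ k ∈ {i}ᶜ, wt α β (θ k) with hQ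
    have hd : ∀ x, dens α β γ (Function.update θ i x) =
        vand γ (Function.update θ i x) * (wt α β x * Q) := by
      intro x
      rw [dens, Fintype.prod_eq_mul_prod_compl i, Function.update_self]
      congr 2
      refine Finset.prod_congr rfl fun k hk => ?_
      rw [Function.update_of_ne (by simpa using hk)]
    have hPu : ∀ x, P (Function.update θ i x) = P θ := by
      intro x
      refine Finset.prod_congr rfl fun s hs => ?_
      have h : s ≠ i := fun h => hi (h ▸ hs)
      rw [Function.update_of_ne h]
    have hd0 : dens α β γ θ = vand γ θ * (wt α β (θ i) * Q) := by
      have := hd (θ i); rwa [Function.update_eq_self] at this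
    have := (((hasDerivAt_vand γ i θ h2).mul
      (hasDerivAt_one_sub_pt_mul_wt α β h1)).const_mul (P θ * Q))
    refine (this.congr_of_eventuallyEq (Eventually.of_forall fun x => ?_)).congr_deriv ?_
    · simp only [hPu, hd, Function.update_self, Pi.mul_apply]
      ring
    · rw [Function.update_eq_self, hd0, ← Finset.mul_sum, ← Finset.mul_sum, ← Finset.mul_sum]
      ring
  · intro θ h
    rw [dens_zero_of_chord hα β γ i h]
    ring

/-- Aomoto's recursion, iterated along the elements of `S`. -/
lemma aomoto_rec {n : ℕ} {α γ : ℂ} (hα : 0 < α.re) (β : ℂ) (hγ : 1 ≤ γ.re)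
    (S : Finset (Fin (n + 1))) :
    (∏ j ∈ Finset.range S.card, (1 + (α + β) + ((n : ℂ) - j) * γ)) * aomoto α β γ S =
      (∏ j ∈ Finset.range S.card, (1 + 2 * α + ((n : ℂ) - j) * γ)) * J (n + 1) α β γ := by
  induction S using Finset.induction_on with
  | empty => simp [aomoto, J]
  | insert i S hi ih =>
    rw [Finset.card_insert_of_notMem hi, Finset.prod_range_succ, Finset.prod_range_succ]
    have := aomoto_step hα β hγ hi
    linear_combination (∏ j ∈ Finset.range S.card, (1 + (α + β) + ((n : ℂ) - j) * γ)) * this +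
      (1 + 2 * α + ((n : ℂ) - S.card) * γ) * ih

/-- `1 - e^{ix} = |1 - e^{ix}| e^{i (x - π) / 2}` on `(0, 2π]`. -/
lemma one_sub_pt_eq {x : ℝ} (hx : x ∈ Set.Ioc 0 (2 * Real.pi)) :
    1 - pt x = chord x * Complex.exp (Complex.I * ((x - Real.pi : ℝ) : ℂ) * (1 / 2)) := by
  have hs : 0 ≤ Real.sin (x / 2) :=
    Real.sin_nonneg_of_nonneg_of_le_pi (by linarith [hx.1]) (by linarith [hx.2])
  have h := cos_sq_add x
  have e : Complex.I * ((x - Real.pi : ℝ) : ℂ) * (1 / 2) =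
      (((x / 2 - Real.pi / 2 : ℝ)) : ℂ) * Complex.I := by push_cast; ring
  rw [pt, exp_half_sq, e, Complex.exp_mul_I, ← Complex.ofReal_cos, ← Complex.ofReal_sin,
    Real.cos_sub_pi_div_two, Real.sin_sub_pi_div_two, chord, abs_of_nonneg (by positivity)]
  push_cast
  rw [Complex.ofReal_cos, Complex.ofReal_sin] at h
  push_cast at h
  linear_combination -h - (Complex.sin ((x : ℂ) / 2)) ^ 2 * Complex.I_sq

lemma one_sub_pt_mul_wt {α : ℂ} (hα : 0 < α.re) (β : ℂ) {x : ℝ}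
    (hx : x ∈ Set.Ioc 0 (2 * Real.pi)) :
    (1 - pt x) * wt α β x = wt (α + 1 / 2) (β + 1 / 2) x := by
  by_cases hc : chord x = 0
  · rw [wt_zero_of_chord hα β hc, wt_zero_of_chord (by simp; linarith) _ hc, mul_zero]
  rw [one_sub_pt_eq hx, wt, wt, cpw, cpw, mul_add, Complex.exp_add,
    show 2 * (α + 1 / 2) = 2 * α + 1 by ring, Complex.cpow_add _ _ (by exact_mod_cast hc),
    Complex.cpow_one]
  ring

/-- With all factors `1 - e^{iθ_j}` present, Aomoto's average is again a Morris integral, because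
the branch of the phase on `(0, 2π]` gives `(1 - e^{ix}) wt α β x = wt (α + 1/2) (β + 1/2) x`. -/
lemma aomoto_univ {n : ℕ} {α : ℂ} (hα : 0 < α.re) (β γ : ℂ) :
    aomoto α β γ (Finset.univ : Finset (Fin n)) = J n (α + 1 / 2) (β + 1 / 2) γ := by
  unfold aomoto J
  have hmem : ∀ᵐ θ ∂torus n, ∀ i, θ i ∈ Set.Ioc 0 (2 * Real.pi) := by
    rw [torus_eq_restrict]
    filter_upwards [ae_restrict_mem (MeasurableSet.univ_pi fun _ => measurableSet_Ioc)] with θ h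
    exact fun i => h i (Set.mem_univ i)
  refine integral_congr_ae ?_
  filter_upwards [hmem] with θ hθ
  simp only [dens]
  rw [mul_left_comm, ← Finset.prod_mul_distrib]
  congr 1
  exact Finset.prod_congr rfl fun j _ => one_sub_pt_mul_wt hα β (hθ j)

/-- The contiguity relation between the integrals at `(α, β)` and `(α + 1/2, β + 1/2)`. -/
lemma J_half_shift {n : ℕ} {α γ : ℂ} (hα : 0 < α.re) (β : ℂ) (hγ : 1 ≤ γ.re) :
    (∏ j ∈ Finset.range n, (1 + (α + β) + j * γ)) * J n (α + 1 / 2) (β + 1 / 2) γ =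
      (∏ j ∈ Finset.range n, (1 + 2 * α + j * γ)) * J n α β γ := by
  obtain _ | n := n
  · simp [J, dens, vand]
  have h := aomoto_rec hα β hγ (Finset.univ : Finset (Fin (n + 1)))
  rw [aomoto_univ hα, Finset.card_univ, Fintype.card_fin] at h
  rw [← Finset.prod_range_reflect, ← Finset.prod_range_reflect (fun j : ℕ => 1 + 2 * α + j * γ)]
  convert h using 2
  · refine Finset.prod_congr rfl fun j hj => ?_
    have : j ≤ n := Nat.lt_succ_iff.1 (Finset.mem_range.1 hj)
    rw [show n + 1 - 1 - j = n - j by omega, Nat.cast_sub this]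
  · refine Finset.prod_congr rfl fun j hj => ?_
    have : j ≤ n := Nat.lt_succ_iff.1 (Finset.mem_range.1 hj)
    rw [show n + 1 - 1 - j = n - j by omega, Nat.cast_sub this]

/-! ### The normalised integral and its shift invariance -/

lemma measurePreserving_reflect :
    MeasurePreserving (fun x : ℝ => 2 * Real.pi - x) circ circ := by
  have h := (Measure.measurePreserving_sub_left (volume : Measure ℝ) (2 * Real.pi)).restrict_preimage
    (s := Set.Ioc 0 (2 * Real.pi)) measurableSet_Ioc
  have hpre : (fun x : ℝ => 2 * Real.pi - x) ⁻¹' Set.Ioc 0 (2 * Real.pi) =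
      Set.Ico 0 (2 * Real.pi) := by
    ext x
    simp only [Set.mem_preimage, Set.mem_Ioc, Set.mem_Ico]
    constructor <;> rintro ⟨h1, h2⟩ <;> constructor <;> linarith
  rw [hpre, Measure.restrict_congr_set Ico_ae_eq_Ioc] at h
  exact h

/-- Reflecting all the variables changes the sign of `β`. -/
lemma J_neg_β (n : ℕ) (α β γ : ℂ) : J n α (-β) γ = J n α β γ := by
  have h : MeasurePreserving (fun (θ : Fin n → ℝ) j => 2 * Real.pi - θ j) (torus n) (torus n) :=
    measurePreserving_pi _ _ fun _ => measurePreserving_reflect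
  have hm : AEStronglyMeasurable (dens (n := n) α β γ)
      (Measure.map (fun (θ : Fin n → ℝ) j => 2 * Real.pi - θ j) (torus n)) :=
    (measurable_dens n α β γ).aestronglyMeasurable
  unfold J
  conv_rhs => rw [← h.map_eq]
  rw [integral_map h.measurable.aemeasurable hm]
  congr 1
  funext θ
  unfold dens
  congr 1
  · unfold vand
    refine Finset.prod_congr rfl fun j _ => Finset.prod_congr rfl fun k _ => ?_
    rw [show 2 * Real.pi - θ j - (2 * Real.pi - θ k) = θ k - θ j by ring, cpw_sub_comm]
  · refine Finset.prod_congr rfl fun j _ => ?_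
    rw [wt, wt, cpw, cpw, chord_two_pi_sub]
    congr 2
    push_cast
    ring

/-- The product of Gamma functions by which `J` is multiplied to obtain a function of `(α, β)`
invariant under the shift by `(1/2, 1/2)`. -/
noncomputable def gprod (n : ℕ) (α β γ : ℂ) : ℂ :=
  ∏ j ∈ Finset.range n, Complex.Gamma (1 + α + β + j * γ) * Complex.Gamma (1 + α - β + j * γ) /
    Complex.Gamma (1 + 2 * α + j * γ)

lemma re_add_nat_mul_pos {s γ : ℂ} (hs : 0 < s.re) (hγ : 0 ≤ γ.re) (j : ℕ) :
    0 < (s + j * γ).re := by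
  have : 0 ≤ (j : ℝ) * γ.re := by positivity
  simp; linarith

lemma ne_zero_of_re {s : ℂ} (hs : 0 < s.re) : s ≠ 0 := by
  rintro rfl; simp at hs

lemma gprod_ne_zero (n : ℕ) {α β γ : ℂ} (h : |β.re| < α.re) (hγ : 0 ≤ γ.re) :
    gprod n α β γ ≠ 0 := by
  obtain ⟨h1, h2⟩ := abs_lt.1 h
  refine Finset.prod_ne_zero_iff.2 fun j _ => div_ne_zero (mul_ne_zero ?_ ?_) ?_ <;>
    refine Complex.Gamma_ne_zero_of_re_pos (re_add_nat_mul_pos ?_ hγ j) <;> simp <;> linarith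

lemma gprod_neg_β (n : ℕ) (α β γ : ℂ) : gprod n α (-β) γ = gprod n α β γ := by
  unfold gprod
  refine Finset.prod_congr rfl fun j _ => ?_
  rw [sub_neg_eq_add, ← sub_eq_add_neg]
  ring

lemma gprod_half_shift (n : ℕ) {α β γ : ℂ} (h : |β.re| < α.re) (hγ : 0 ≤ γ.re) :
    (∏ j ∈ Finset.range n, (1 + 2 * α + j * γ)) * gprod n (α + 1 / 2) (β + 1 / 2) γ =
      (∏ j ∈ Finset.range n, (1 + (α + β) + j * γ)) * gprod n α β γ := by
  obtain ⟨h1, h2⟩ := abs_lt.1 h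
  unfold gprod
  rw [← Finset.prod_mul_distrib, ← Finset.prod_mul_distrib]
  refine Finset.prod_congr rfl fun j _ => ?_
  have e1 : (1 + 2 * α + j * γ) ≠ 0 :=
    ne_zero_of_re (re_add_nat_mul_pos (by simp; linarith) hγ j)
  have e2 : (1 + α + β + j * γ) ≠ 0 :=
    ne_zero_of_re (re_add_nat_mul_pos (by simp; linarith) hγ j)
  rw [show 1 + (α + 1 / 2) + (β + 1 / 2) + j * γ = (1 + α + β + j * γ) + 1 by ring,
    show 1 + (α + 1 / 2) - (β + 1 / 2) + j * γ = 1 + α - β + j * γ by ring,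
    show 1 + 2 * (α + 1 / 2) + j * γ = (1 + 2 * α + j * γ) + 1 by ring,
    Complex.Gamma_add_one _ e1, Complex.Gamma_add_one _ e2]
  have e3 : Complex.Gamma (1 + 2 * α + j * γ) ≠ 0 :=
    Complex.Gamma_ne_zero_of_re_pos (re_add_nat_mul_pos (by simp; linarith) hγ j)
  field_simp
  ring

/-- The normalised integral. It is even in `β` and invariant under `(α, β) ↦ (α + 1/2, β + 1/2)`,
hence under `α ↦ α + 1`. -/
noncomputable def H (n : ℕ) (α β γ : ℂ) : ℂ := J n α β γ * gprod n α β γ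

lemma H_neg_β (n : ℕ) (α β γ : ℂ) : H n α (-β) γ = H n α β γ := by
  rw [H, H, J_neg_β, gprod_neg_β]

lemma H_half_shift (n : ℕ) {α β γ : ℂ} (h : |β.re| < α.re) (hγ : 1 ≤ γ.re) :
    H n (α + 1 / 2) (β + 1 / 2) γ = H n α β γ := by
  obtain ⟨h1, h2⟩ := abs_lt.1 h
  have hγ0 : 0 ≤ γ.re := by linarith
  have a := J_half_shift (n := n) (by linarith : 0 < α.re) β hγ
  have b := gprod_half_shift n h hγ0
  have p1 : ∏ j ∈ Finset.range n, (1 + 2 * α + j * γ) ≠ 0 := Finset.prod_ne_zero_iff.2 fun j _ =>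
    ne_zero_of_re (re_add_nat_mul_pos (by simp; linarith) hγ0 j)
  have p2 : ∏ j ∈ Finset.range n, (1 + (α + β) + j * γ) ≠ 0 :=
    Finset.prod_ne_zero_iff.2 fun j _ =>
      ne_zero_of_re (re_add_nat_mul_pos (by simp; linarith) hγ0 j)
  unfold H
  refine mul_left_cancel₀ p1 (mul_left_cancel₀ p2 ?_)
  linear_combination (∏ j ∈ Finset.range n, (1 + 2 * α + j * γ)) *
    gprod n (α + 1 / 2) (β + 1 / 2) γ * a +
    (∏ j ∈ Finset.range n, (1 + 2 * α + j * γ)) * J n α β γ * b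

lemma H_one_shift (n : ℕ) {α β γ : ℂ} (h : |β.re| < α.re) (hγ : 1 ≤ γ.re) :
    H n (α + 1) β γ = H n α β γ := by
  obtain ⟨h1, h2⟩ := abs_lt.1 h
  have h' : |(-(β + 1 / 2)).re| < (α + 1 / 2).re := by
    simp only [Complex.neg_re, Complex.add_re, abs_neg]
    norm_num
    rw [abs_lt]; constructor <;> linarith
  have := H_half_shift n h' hγ
  rw [H_neg_β, H_half_shift n h hγ] at this
  rw [← this, ← H_neg_β]
  congr 1 <;> ring

lemma H_nat_shift (n : ℕ) {α β γ : ℂ} (h : |β.re| < α.re) (hγ : 1 ≤ γ.re) (N : ℕ) :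
    H n (α + N) β γ = H n α β γ := by
  induction N with
  | zero => simp
  | succ N ih =>
    have h' : |β.re| < (α + N).re := by
      have : (0 : ℝ) ≤ N := by positivity
      simp; linarith
    rw [Nat.cast_succ, ← add_assoc, H_one_shift n h' hγ, ih]

lemma Gamma_add_succ {s : ℂ} (hs : 0 < s.re) (N : ℕ) :
    Complex.Gamma (s + N) = (∏ j ∈ Finset.range N, (s + j)) * Complex.Gamma s := by
  induction N with
  | zero => simp
  | succ N ih =>
    have : 0 < (s + N).re := by
      have : (0 : ℝ) ≤ N := by positivity
      simp; linarith
    rw [Nat.cast_succ, ← add_assoc, Complex.Gamma_add_one _ (ne_zero_of_re this), ih,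
      Finset.prod_range_succ]
    ring

/-- Euler's limit formula for `Γ(s)`, read as the asymptotics of `Γ(s + N + 1)`. -/
lemma tendsto_gamma_ratio {s : ℂ} (hs : 0 < s.re) :
    Tendsto (fun N : ℕ => Complex.Gamma (s + (N + 1 : ℕ)) / ((N : ℂ) ^ s * N.factorial)) atTop
      (𝓝 1) := by
  have hne := Complex.Gamma_ne_zero_of_re_pos hs
  have h := (tendsto_const_nhds (x := Complex.Gamma s)).div (Complex.GammaSeq_tendsto_Gamma s) hne
  rw [div_self hne] at h
  refine h.congr fun N => ?_
  rw [Gamma_add_succ hs]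
  simp only [Pi.div_apply, Complex.GammaSeq]
  rw [div_div_eq_mul_div, mul_comm]

/-- The leading asymptotics of a factor of `gprod` at `α + N + 1`, up to the factor `2 ^ (-2 α)`. -/
noncomputable def kfac (γ : ℂ) (N j : ℕ) : ℂ :=
  (N.factorial : ℂ) ^ 2 / (2 * N).factorial * (N : ℂ) ^ (j * γ) / 2 ^ (2 + j * γ)

lemma tendsto_gprod (n : ℕ) {α β γ : ℂ} (h : |β.re| < α.re) (hγ : 0 ≤ γ.re) :
    Tendsto (fun N : ℕ => gprod n (α + (N + 1 : ℕ)) β γ * ((2 : ℂ) ^ (2 * α)) ^ n /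
      ∏ j ∈ Finset.range n, kfac γ N j) atTop (𝓝 1) := by
  obtain ⟨h1, h2⟩ := abs_lt.1 h
  have h2N : Tendsto (fun N : ℕ => 2 * N) atTop atTop :=
    tendsto_id.const_mul_atTop' (by norm_num)
  have key : ∀ j ∈ Finset.range n, Tendsto (fun N : ℕ =>
      (Complex.Gamma ((1 + α + β + j * γ) + (N + 1 : ℕ)) / ((N : ℂ) ^ (1 + α + β + j * γ) *
        N.factorial)) * (Complex.Gamma ((1 + α - β + j * γ) + (N + 1 : ℕ)) /
        ((N : ℂ) ^ (1 + α - β + j * γ) * N.factorial)) /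
      (Complex.Gamma ((2 + 2 * α + j * γ) + (2 * N + 1 : ℕ)) /
        (((2 * N : ℕ) : ℂ) ^ (2 + 2 * α + j * γ) * (2 * N).factorial))) atTop (𝓝 1) := by
    intro j _
    have t1 := tendsto_gamma_ratio (re_add_nat_mul_pos (s := 1 + α + β) (by simp; linarith) hγ j)
    have t2 := tendsto_gamma_ratio (re_add_nat_mul_pos (s := 1 + α - β) (by simp; linarith) hγ j)
    have t3 := (tendsto_gamma_ratio (re_add_nat_mul_pos (s := 2 + 2 * α) (by simp; linarith)
      hγ j)).comp h2N
    have := (t1.mul t2).div t3 one_ne_zero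
    rw [one_mul, div_one] at this
    exact this
  have hp := tendsto_finsetProd (Finset.range n) key
  simp only [Finset.prod_const_one] at hp
  refine hp.congr' ?_
  filter_upwards [eventually_ge_atTop 1] with N hN
  have hN0 : (N : ℂ) ≠ 0 := by exact_mod_cast (by omega : N ≠ 0)
  have hpow : ((2 : ℂ) ^ (2 * α)) ^ n = ∏ j ∈ Finset.range n, (2 : ℂ) ^ (2 * α) := by
    rw [Finset.prod_const, Finset.card_range]
  rw [gprod, hpow, ← Finset.prod_mul_distrib, ← Finset.prod_div_distrib]
  refine Finset.prod_congr rfl fun j _ => ?_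
  rw [show 1 + (α + (N + 1 : ℕ)) + β + j * γ = (1 + α + β + j * γ) + (N + 1 : ℕ) by ring,
    show 1 + (α + (N + 1 : ℕ)) - β + j * γ = (1 + α - β + j * γ) + (N + 1 : ℕ) by ring,
    show 1 + 2 * (α + (N + 1 : ℕ)) + j * γ = (2 + 2 * α + j * γ) + (2 * N + 1 : ℕ) by
      push_cast; ring]
  set G1 := Complex.Gamma ((1 + α + β + j * γ) + (N + 1 : ℕ))
  set G2 := Complex.Gamma ((1 + α - β + j * γ) + (N + 1 : ℕ))
  set G3 := Complex.Gamma ((2 + 2 * α + j * γ) + (2 * N + 1 : ℕ))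
  have e2N : ((2 * N : ℕ) : ℂ) ^ (2 + 2 * α + j * γ) =
      (2 : ℂ) ^ (2 * α) * 2 ^ (2 + j * γ) * (N : ℂ) ^ (2 + 2 * α + j * γ) := by
    rw [Nat.cast_mul, Complex.natCast_mul_natCast_cpow, ← Complex.cpow_add _ _ (by norm_num)]
    norm_num
    left
    congr 1
    ring
  have eN : (N : ℂ) ^ (1 + α + β + j * γ) * (N : ℂ) ^ (1 + α - β + j * γ) =
      (N : ℂ) ^ (2 + 2 * α + j * γ) * (N : ℂ) ^ (j * γ) := by
    rw [← Complex.cpow_add _ _ hN0, ← Complex.cpow_add _ _ hN0]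
    congr 1
    ring
  have z1 : (N : ℂ) ^ (1 + α + β + j * γ) ≠ 0 := by simp [Complex.cpow_eq_zero_iff, hN0]
  have z2 : (N : ℂ) ^ (1 + α - β + j * γ) ≠ 0 := by simp [Complex.cpow_eq_zero_iff, hN0]
  have z3 : (N : ℂ) ^ (2 + 2 * α + j * γ) ≠ 0 := by simp [Complex.cpow_eq_zero_iff, hN0]
  have z4 : (N : ℂ) ^ (j * γ) ≠ 0 := by simp [Complex.cpow_eq_zero_iff, hN0]
  have z5 : (2 : ℂ) ^ (2 + j * γ) ≠ 0 := by simp [Complex.cpow_eq_zero_iff]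
  have f1 : (N.factorial : ℂ) ≠ 0 := by exact_mod_cast N.factorial_ne_zero
  have f2 : ((2 * N).factorial : ℂ) ≠ 0 := by exact_mod_cast (2 * N).factorial_ne_zero
  rw [e2N, kfac, div_mul_div_comm, show ∀ a b c d : ℂ, a * b * (c * d) = a * c * (b * d) from
    fun a b c d => by ring, eN]
  clear_value G1 G2 G3
  generalize (N : ℂ) ^ (2 + 2 * α + j * γ) = X3 at *
  generalize (N : ℂ) ^ (j * γ) = X4 at *
  generalize (2 : ℂ) ^ (2 + j * γ) = X5 at *
  field_simp

/-! ### Concentration at the antipodal point -/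

lemma cpw_ofReal (c x : ℝ) : cpw (c : ℂ) x = ((chord x ^ c : ℝ) : ℂ) := by
  rw [cpw, Complex.ofReal_cpow (chord_nonneg x)]

/-- The integrand for real `α`, `γ` and `β = 0`, as a real function. -/
noncomputable def rdens {n : ℕ} (a γ : ℝ) (θ : Fin n → ℝ) : ℝ :=
  (∏ j, ∏ k ∈ {j}ᶜ, chord (θ j - θ k) ^ γ) * ∏ j, chord (θ j) ^ (2 * a)

lemma dens_ofReal {n : ℕ} (a γ : ℝ) (θ : Fin n → ℝ) :
    dens (a : ℂ) 0 (γ : ℂ) θ = (rdens a γ θ : ℂ) := by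
  have hw : ∀ x, wt (a : ℂ) 0 x = ((chord x ^ (2 * a) : ℝ) : ℂ) := by
    intro x
    rw [wt, mul_zero, Complex.exp_zero, one_mul, ← cpw_ofReal]
    push_cast
    rfl
  simp only [dens, vand, rdens, hw, cpw_ofReal, Complex.ofReal_mul, Complex.ofReal_prod]

lemma rdens_nonneg {n : ℕ} (a γ : ℝ) (θ : Fin n → ℝ) : 0 ≤ rdens a γ θ :=
  mul_nonneg (Finset.prod_nonneg fun _ _ => Finset.prod_nonneg fun _ _ =>
    Real.rpow_nonneg (chord_nonneg _) _)
    (Finset.prod_nonneg fun _ _ => Real.rpow_nonneg (chord_nonneg _) _)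

lemma integrable_rdens (n : ℕ) {a γ : ℝ} (ha : 0 < a) (hγ : 1 ≤ γ) :
    Integrable (rdens (n := n + 1) a γ) (torus (n + 1)) := by
  have := (integrable_dens' (n := n) (α := a) (γ := γ) (by simpa using ha) 0 (by simpa using hγ)).re
  simpa [dens_ofReal] using this

lemma J_ofReal (n : ℕ) (a γ : ℝ) :
    J n a 0 γ = ((∫ θ, rdens a γ θ ∂torus n : ℝ) : ℂ) := by
  rw [J, ← integral_complex_ofReal]
  simp only [dens_ofReal]

lemma integral_rdens_pos (n : ℕ) {a γ : ℝ} (ha : 0 < a) (hγ : 1 ≤ γ) :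
    0 < ∫ θ, rdens a γ θ ∂torus (n + 1) := by
  refine lt_of_le_of_ne (integral_nonneg fun θ => rdens_nonneg a γ θ) fun h => ?_
  have h0 := (integral_eq_zero_iff_of_nonneg (fun θ => rdens_nonneg a γ θ)
    (integrable_rdens n ha hγ)).1 h.symm
  have hfalse : ∀ᵐ _ ∂torus (n + 1), False := by
    filter_upwards [h0, ae_torus_generic (n + 1)] with θ h1 h2
    refine absurd h1 (ne_of_gt ?_)
    refine mul_pos (Finset.prod_pos fun j _ => Finset.prod_pos fun k hk => ?_)
      (Finset.prod_pos fun j _ => ?_)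
    · have hjk : j ≠ k := by simpa [eq_comm] using hk
      exact Real.rpow_pos_of_pos (lt_of_le_of_ne (chord_nonneg _) (h2.2 j k hjk).symm) _
    · exact Real.rpow_pos_of_pos (lt_of_le_of_ne (chord_nonneg _) (h2.1 j).symm) _
  have hz : torus (n + 1) Set.univ = 0 := by simpa [ae_iff] using hfalse
  rw [torus, Measure.pi_univ] at hz
  obtain ⟨_, _, hz⟩ := Finset.prod_eq_zero_iff.1 hz
  have hz' : Real.pi ≤ 0 := by simpa [circ] using hz
  exact absurd hz' (not_le.2 Real.pi_pos)

lemma wt_add {a : ℝ} {α : ℂ} (ha : 0 < a) (hα : 0 < α.re) (β : ℂ) (x : ℝ) :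
    wt (α + a) β x = wt a 0 x * wt α β x := by
  by_cases hc : chord x = 0
  · rw [wt_zero_of_chord hα β hc, wt_zero_of_chord (by simp; linarith) _ hc, mul_zero]
  rw [wt, wt, wt, mul_zero, Complex.exp_zero, cpw, cpw, cpw, mul_add,
    Complex.cpow_add _ _ (by exact_mod_cast hc)]
  ring

lemma dens_add {n : ℕ} {a γ : ℝ} {α : ℂ} (ha : 0 < a) (hα : 0 < α.re) (β : ℂ)
    (θ : Fin n → ℝ) :
    dens (α + a) β γ θ = (rdens a γ θ : ℂ) * ∏ j, wt α β (θ j) := by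
  rw [← dens_ofReal, dens, dens, mul_assoc, ← Finset.prod_mul_distrib]
  simp only [wt_add ha hα]

/-- The product of the normalised squared distances `|1 - e^{iθ_j}|² / 4`. -/
noncomputable def usq {n : ℕ} (θ : Fin n → ℝ) : ℝ := ∏ j, (chord (θ j) / 2) ^ 2

lemma continuous_usq (n : ℕ) : Continuous (usq (n := n)) :=
  continuous_finsetProd _ fun j _ =>
    ((continuous_chord.comp (continuous_apply j)).div_const 2).pow 2

lemma chord_half_sq_le (x : ℝ) : (chord x / 2) ^ 2 ≤ 1 :=
  pow_le_one₀ (by linarith [chord_nonneg x]) (by linarith [chord_le_two x])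

lemma usq_le_one {n : ℕ} (θ : Fin n → ℝ) : usq θ ≤ 1 :=
  Finset.prod_le_one (fun _ _ => sq_nonneg _) fun _ _ => chord_half_sq_le _

lemma eq_pi_of_usq_eq_one {n : ℕ} {θ : Fin n → ℝ}
    (hθ : θ ∈ Set.univ.pi fun _ : Fin n => Set.Icc (0 : ℝ) (2 * Real.pi)) (h : usq θ = 1)
    (j : Fin n) : θ j = Real.pi := by
  have hj := hθ j (Set.mem_univ j)
  have h1 : (chord (θ j) / 2) ^ 2 = 1 := by
    refine le_antisymm (chord_half_sq_le _) ?_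
    rw [← h, usq, ← Finset.mul_prod_erase _ _ (Finset.mem_univ j)]
    exact mul_le_of_le_one_right (sq_nonneg _)
      (Finset.prod_le_one (fun _ _ => sq_nonneg _) fun _ _ => chord_half_sq_le _)
  have hs : Real.sin (θ j / 2) ^ 2 = 1 := by
    rw [chord, div_pow, sq_abs] at h1; nlinarith
  have hc : Real.cos (θ j / 2) = 0 := by
    have := Real.sin_sq_add_cos_sq (θ j / 2)
    nlinarith
  have m1 : θ j / 2 ∈ Set.Icc 0 Real.pi := ⟨by linarith [hj.1], by linarith [hj.2]⟩
  have m2 : Real.pi / 2 ∈ Set.Icc 0 Real.pi :=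
    ⟨by linarith [Real.pi_pos], by linarith [Real.pi_pos]⟩
  have := Real.injOn_cos m1 m2 (by rw [hc, Real.cos_pi_div_two])
  linarith

lemma wt_pi (α β : ℂ) : wt α β Real.pi = 2 ^ (2 * α) := by
  rw [wt, cpw, chord, Real.sin_pi_div_two]
  simp

/-- A continuous function is controlled by its value at the unique maximum point of `usq`. -/
lemma exists_bound_usq (n : ℕ) {W : (Fin n → ℝ) → ℂ} (hW : Continuous W) {ε : ℝ} (hε : 0 < ε) :
    ∃ C : ℝ, 0 ≤ C ∧ ∀ θ ∈ Set.univ.pi fun _ : Fin n => Set.Icc (0 : ℝ) (2 * Real.pi),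
      ‖W θ - W fun _ => Real.pi‖ ≤ ε + C * (1 - usq θ) := by
  set K := Set.univ.pi fun _ : Fin n => Set.Icc (0 : ℝ) (2 * Real.pi)
  have hK : IsCompact K := isCompact_univ_pi fun _ => isCompact_Icc
  set F : (Fin n → ℝ) → ℝ := fun θ => ‖W θ - W fun _ => Real.pi‖
  have hF : Continuous F := (hW.sub continuous_const).norm
  set S := K ∩ {θ | ε ≤ F θ}
  have hS : IsCompact S := hK.inter_right (isClosed_le continuous_const hF)
  obtain hSe | hSn := S.eq_empty_or_nonempty
  · refine ⟨0, le_rfl, fun θ hθ => ?_⟩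
    have : ¬ ε ≤ F θ := fun h => by
      have : θ ∈ S := ⟨hθ, h⟩
      rw [hSe] at this; exact this
    simp only [zero_mul, add_zero]
    exact (not_le.1 this).le
  · obtain ⟨θ₀, hθ₀, hmin⟩ := hS.exists_isMinOn hSn
      (continuous_const.sub (continuous_usq n) : Continuous fun θ => 1 - usq θ).continuousOn
    obtain ⟨M, hM⟩ := hK.bddAbove_image hF.continuousOn
    have hm : 0 < 1 - usq θ₀ := by
      refine lt_of_le_of_ne (by linarith [usq_le_one θ₀]) fun h => ?_
      have := eq_pi_of_usq_eq_one hθ₀.1 (by linarith)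
      have h2 : F θ₀ = 0 := by
        have : θ₀ = fun _ => Real.pi := funext this
        simp [F, this]
      have h3 : ε ≤ F θ₀ := hθ₀.2
      linarith
    have hM0 : 0 ≤ M := (norm_nonneg _).trans (hM ⟨θ₀, hθ₀.1, rfl⟩)
    refine ⟨M / (1 - usq θ₀), by positivity, fun θ hθ => ?_⟩
    have hu := usq_le_one θ
    by_cases h : ε ≤ F θ
    · have h1 : 1 - usq θ₀ ≤ 1 - usq θ := hmin (a := θ) ⟨hθ, h⟩
      have h2 : M ≤ M / (1 - usq θ₀) * (1 - usq θ) := by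
        rw [div_mul_eq_mul_div, le_div_iff₀ hm]
        exact mul_le_mul_of_nonneg_left h1 hM0
      have h3 : F θ ≤ M := hM ⟨θ, hθ, rfl⟩
      change F θ ≤ _
      linarith
    · have h2 : 0 ≤ M / (1 - usq θ₀) * (1 - usq θ) := by
        have : 0 ≤ 1 - usq θ := by linarith
        positivity
      change F θ ≤ _
      linarith

lemma rdens_mul_usq {n : ℕ} {a : ℝ} (γ : ℝ) (ha : 0 < a) (θ : Fin n → ℝ) :
    rdens a γ θ * usq θ = rdens (a + 1) γ θ / 4 ^ n := by
  have : ∀ x : ℝ, chord x ^ (2 * (a + 1)) = 4 * (chord x ^ (2 * a) * (chord x / 2) ^ 2) := by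
    intro x
    rw [mul_add, mul_one, Real.rpow_add_of_nonneg (chord_nonneg x) (by linarith) (by norm_num),
      Real.rpow_two]
    ring
  simp only [rdens, usq, this, Finset.prod_mul_distrib, Finset.prod_const, Finset.card_univ,
    Fintype.card_fin]
  field_simp

lemma ae_mem_cube (n : ℕ) :
    ∀ᵐ θ ∂torus n, θ ∈ Set.univ.pi fun _ : Fin n => Set.Icc (0 : ℝ) (2 * Real.pi) := by
  rw [torus_eq_restrict]
  filter_upwards [ae_restrict_mem (MeasurableSet.univ_pi fun _ => measurableSet_Ioc)] with θ h
  exact fun i hi => Set.Ioc_subset_Icc_self (h i hi)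

/-- Replacing `∏_j wt α β (θ_j)` by its value at `(π, …, π)` costs at most a small multiple of the
total mass plus a multiple of the mass weighted by `1 - usq`; the latter is expressed through the
integral at `a + 1` by `rdens_mul_usq`. -/
lemma norm_J_sub_le (n : ℕ) {α : ℂ} (hα : 0 < α.re) (β : ℂ) {γ : ℝ} (hγ : 1 ≤ γ) {ε : ℝ}
    (hε : 0 < ε) : ∃ C : ℝ, 0 ≤ C ∧ ∀ a : ℝ, 0 < a →
      ‖J (n + 1) (α + a) β γ - J (n + 1) a 0 γ * (2 ^ (2 * α)) ^ (n + 1)‖ ≤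
        ε * (∫ θ, rdens a γ θ ∂torus (n + 1)) + C * ((∫ θ, rdens a γ θ ∂torus (n + 1)) -
          (∫ θ, rdens (a + 1) γ θ ∂torus (n + 1)) / 4 ^ (n + 1)) := by
  set W : (Fin (n + 1) → ℝ) → ℂ := fun θ => ∏ j, wt α β (θ j) with hWdef
  have hW : Continuous W := continuous_finsetProd _ fun j _ =>
    (continuous_wt hα β).comp (continuous_apply j)
  have hWpi : (W fun _ => Real.pi) = (2 ^ (2 * α)) ^ (n + 1) := by
    simp [W, wt_pi]
  obtain ⟨C, hC, hbound⟩ := exists_bound_usq (n + 1) hW hε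
  refine ⟨C, hC, fun a ha => ?_⟩
  have i0 := integrable_rdens n ha hγ
  have i1 := integrable_rdens n (show 0 < a + 1 by linarith) hγ
  have i2 : Integrable (fun θ => dens (α + a) β γ θ) (torus (n + 1)) :=
    integrable_dens' (by simp; linarith) β (by simpa using hγ)
  rw [hWpi] at hbound
  set c : ℂ := (2 ^ (2 * α)) ^ (n + 1)
  have i0' : Integrable (fun θ => (rdens a γ θ : ℂ) * c) (torus (n + 1)) :=
    i0.ofReal.mul_const c
  have e1 : J (n + 1) (α + a) β γ - J (n + 1) a 0 γ * c =
      ∫ θ, (rdens a γ θ : ℂ) * (W θ - c) ∂torus (n + 1) := by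
    rw [J_ofReal, ← integral_complex_ofReal, ← integral_mul_const, J, ← integral_sub i2 i0']
    congr 1
    funext θ
    rw [dens_add ha hα]
    ring
  have i3 : Integrable (fun θ => ε * rdens a γ θ + C * (rdens a γ θ - rdens (a + 1) γ θ /
      4 ^ (n + 1))) (torus (n + 1)) :=
    (i0.const_mul ε).add ((i0.sub (i1.div_const (4 ^ (n + 1)))).const_mul C)
  have e2 : ε * (∫ θ, rdens a γ θ ∂torus (n + 1)) + C * ((∫ θ, rdens a γ θ ∂torus (n + 1)) -
      (∫ θ, rdens (a + 1) γ θ ∂torus (n + 1)) / 4 ^ (n + 1)) =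
      ∫ θ, (ε * rdens a γ θ + C * (rdens a γ θ - rdens (a + 1) γ θ / 4 ^ (n + 1)))
        ∂torus (n + 1) := by
    have i4 : Integrable (fun θ => rdens a γ θ - rdens (a + 1) γ θ / 4 ^ (n + 1))
      (torus (n + 1)) := i0.sub (i1.div_const (4 ^ (n + 1)))
    rw [integral_add (i0.const_mul ε) (i4.const_mul C), integral_const_mul, integral_const_mul,
      integral_sub i0 (i1.div_const (4 ^ (n + 1))), integral_div]
  rw [e1, e2]
  refine norm_integral_le_of_norm_le i3 ?_
  filter_upwards [ae_mem_cube (n + 1)] with θ hθ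
  rw [norm_mul, Complex.norm_real, Real.norm_of_nonneg (rdens_nonneg a γ θ),
    ← rdens_mul_usq γ ha]
  calc rdens a γ θ * ‖W θ - c‖ ≤ rdens a γ θ * (ε + C * (1 - usq θ)) :=
        mul_le_mul_of_nonneg_left (hbound θ hθ) (rdens_nonneg a γ θ)
    _ = _ := by ring

/-- The Gamma factors at different `(α, β)` differ asymptotically only by a power of `2`; the
dependence on `N` cancels because `kfac` involves neither `α` nor `β`. -/
lemma tendsto_gprod_ratio (n : ℕ) {α β α' β' γ : ℂ} (h : |β.re| < α.re) (h' : |β'.re| < α'.re)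
    (hγ : 0 ≤ γ.re) :
    Tendsto (fun N : ℕ => gprod n (α + (N + 1 : ℕ)) β γ / gprod n (α' + (N + 1 : ℕ)) β' γ) atTop
      (𝓝 (((2 : ℂ) ^ (2 * α')) ^ n / ((2 : ℂ) ^ (2 * α)) ^ n)) := by
  have t := tendsto_gprod n h hγ
  have t' := tendsto_gprod n h' hγ
  have := (t.div t' one_ne_zero).mul_const (((2 : ℂ) ^ (2 * α')) ^ n / ((2 : ℂ) ^ (2 * α)) ^ n)
  rw [div_one, one_mul] at this
  refine this.congr' ?_
  filter_upwards [t.eventually_ne one_ne_zero] with N hN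
  have hK : ∏ j ∈ Finset.range n, kfac γ N j ≠ 0 := fun h0 => hN (by rw [h0, div_zero])
  have z1 : ((2 : ℂ) ^ (2 * α)) ^ n ≠ 0 := by simp
  have z2 : ((2 : ℂ) ^ (2 * α')) ^ n ≠ 0 := by simp
  simp only [Pi.div_apply]
  rw [div_div_div_cancel_right₀ hK]
  generalize ((2 : ℂ) ^ (2 * α)) ^ n = X at *
  generalize ((2 : ℂ) ^ (2 * α')) ^ n = Y at *
  field_simp

lemma H_shift_succ (n : ℕ) {α β γ : ℂ} (h : |β.re| < α.re) (hγ : 1 ≤ γ.re) (N : ℕ) :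
    J n (α + (N + 1 : ℕ)) β γ * gprod n (α + (N + 1 : ℕ)) β γ = H n α β γ :=
  H_nat_shift n h hγ (N + 1)

/-- As `N → ∞`, the mass of the integrand with exponent `N` concentrates at `θ = (π, …, π)`. -/
lemma tendsto_rdens_ratio (n : ℕ) {γ : ℝ} (hγ : 1 ≤ γ) :
    Tendsto (fun N : ℕ => (∫ θ, rdens ((1 : ℝ) + (N + 1 : ℕ) + 1) γ θ ∂torus (n + 1)) /
      4 ^ (n + 1) / ∫ θ, rdens ((1 : ℝ) + (N + 1 : ℕ)) γ θ ∂torus (n + 1)) atTop (𝓝 1) := by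
  have hγ' : 1 ≤ (γ : ℂ).re := by simpa using hγ
  have h1 : |(0 : ℂ).re| < (1 : ℂ).re := by simp
  have h2 : |(0 : ℂ).re| < (2 : ℂ).re := by simp
  have t := (tendsto_gprod_ratio (n + 1) (γ := γ) h1 h2 (by linarith)).div_const (4 ^ (n + 1))
  have hlim : ((2 : ℂ) ^ (2 * (2 : ℂ))) ^ (n + 1) / ((2 : ℂ) ^ (2 * (1 : ℂ))) ^ (n + 1) /
      4 ^ (n + 1) = 1 := by
    have e1 : (2 : ℂ) ^ (2 * (2 : ℂ)) = 16 := by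
      rw [show (2 * (2 : ℂ)) = ((4 : ℕ) : ℂ) by norm_num, Complex.cpow_natCast]; norm_num
    have e2 : (2 : ℂ) ^ (2 * (1 : ℂ)) = 4 := by
      rw [show (2 * (1 : ℂ)) = ((2 : ℕ) : ℂ) by norm_num, Complex.cpow_natCast]; norm_num
    rw [e1, e2, ← div_pow, ← div_pow]
    norm_num
  rw [hlim] at t
  have t' : Tendsto (fun N : ℕ => (((∫ θ, rdens ((1 : ℝ) + (N + 1 : ℕ) + 1) γ θ ∂torus (n + 1)) /
      4 ^ (n + 1) / ∫ θ, rdens ((1 : ℝ) + (N + 1 : ℕ)) γ θ ∂torus (n + 1) : ℝ) : ℂ)) atTop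
      (𝓝 1) := by
    refine t.congr fun N => ?_
    have a1 := H_shift_succ (n + 1) h1 hγ' N
    have a2 := H_shift_succ (n + 1) h2 hγ' N
    have a3 : H (n + 1) 2 0 γ = H (n + 1) 1 0 γ := by
      rw [← H_one_shift (n + 1) h1 hγ']; norm_num
    rw [a3, ← a1] at a2
    have g1 : gprod (n + 1) (2 + (N + 1 : ℕ)) 0 γ ≠ 0 :=
      gprod_ne_zero _ (by simp; positivity) (by linarith)
    have hpos := integral_rdens_pos n (a := (1 : ℝ) + (N + 1 : ℕ)) (by positivity) hγ
    have e1 := J_ofReal (n + 1) ((1 : ℝ) + (N + 1 : ℕ)) γ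
    have e2 := J_ofReal (n + 1) ((1 : ℝ) + (N + 1 : ℕ) + 1) γ
    have c1 : (((1 : ℝ) + (N + 1 : ℕ) : ℝ) : ℂ) = 1 + (N + 1 : ℕ) := by push_cast; ring
    have c2 : (((1 : ℝ) + (N + 1 : ℕ) + 1 : ℝ) : ℂ) = 2 + (N + 1 : ℕ) := by push_cast; ring
    rw [c1] at e1
    rw [c2] at e2
    rw [e1, e2] at a2
    rw [Complex.ofReal_div, Complex.ofReal_div, Complex.ofReal_pow]
    have hne : ((∫ θ, rdens ((1 : ℝ) + (N + 1 : ℕ)) γ θ ∂torus (n + 1) : ℝ) : ℂ) ≠ 0 := by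
      exact_mod_cast hpos.ne'
    push_cast at *
    refine Eq.trans ?_ (div_right_comm _ _ _)
    congr 1
    rw [div_eq_div_iff g1 hne]
    linear_combination -a2
  exact (Complex.continuous_re.tendsto _).comp t'

/-- By concentration at `(π, …, π)`, where the weight `wt α β` takes the value `2 ^ (2 α)`, the
integral at `α + N` is asymptotic to a multiple of the one at `N`. -/
lemma tendsto_J_ratio (n : ℕ) {α : ℂ} (hα : 0 < α.re) (β : ℂ) {γ : ℝ} (hγ : 1 ≤ γ) :
    Tendsto (fun N : ℕ => J (n + 1) (α + 1 + (N + 1 : ℕ)) β γ / J (n + 1) (1 + (N + 1 : ℕ)) 0 γ)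
      atTop (𝓝 ((2 ^ (2 * α)) ^ (n + 1))) := by
  rw [Metric.tendsto_atTop]
  intro ε hε
  obtain ⟨C, hC, hb⟩ := norm_J_sub_le n hα β hγ (half_pos hε)
  have hr := (Metric.tendsto_atTop.1 (tendsto_rdens_ratio n hγ)) (ε / 2 / (C + 1)) (by positivity)
  obtain ⟨N₀, hN₀⟩ := hr
  refine ⟨N₀, fun N hN => ?_⟩
  have h1 := hb ((1 : ℝ) + (N + 1 : ℕ)) (by positivity)
  have h2 := hN₀ N hN
  have hpos := integral_rdens_pos n (a := (1 : ℝ) + (N + 1 : ℕ)) (by positivity) hγ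
  have e1 := J_ofReal (n + 1) ((1 : ℝ) + (N + 1 : ℕ)) γ
  have c1 : (((1 : ℝ) + (N + 1 : ℕ) : ℝ) : ℂ) = 1 + (N + 1 : ℕ) := by push_cast; ring
  rw [e1, c1, show α + (1 + ((N + 1 : ℕ) : ℂ)) = α + 1 + (N + 1 : ℕ) by ring] at h1
  rw [c1] at e1
  rw [e1]
  set A := ∫ θ, rdens ((1 : ℝ) + (N + 1 : ℕ)) γ θ ∂torus (n + 1)
  set B := ∫ θ, rdens ((1 : ℝ) + (N + 1 : ℕ) + 1) γ θ ∂torus (n + 1)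
  have hA : (A : ℂ) ≠ 0 := by exact_mod_cast hpos.ne'
  rw [dist_eq_norm, div_sub' hA, norm_div, Complex.norm_real, Real.norm_of_nonneg hpos.le,
    div_lt_iff₀ hpos]
  refine h1.trans_lt ?_
  rw [Real.dist_eq] at h2
  have h3 : 1 - B / 4 ^ (n + 1) / A < ε / 2 / (C + 1) := by
    have := (abs_lt.1 h2).1; linarith
  have h4 : A - B / 4 ^ (n + 1) = A * (1 - B / 4 ^ (n + 1) / A) := by field_simp
  rw [h4]
  have h5 : C * (1 - B / 4 ^ (n + 1) / A) < ε / 2 := by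
    have h6 : C * (1 - B / 4 ^ (n + 1) / A) ≤ C * (ε / 2 / (C + 1)) :=
      mul_le_mul_of_nonneg_left h3.le hC
    have h7 : C * (ε / 2 / (C + 1)) < ε / 2 := by
      rw [← mul_div_assoc, div_lt_iff₀ (by positivity)]
      nlinarith
    linarith
  nlinarith

/-- The normalised integral does not depend on `(α, β)`. -/
lemma H_eq (n : ℕ) {α β : ℂ} (h : |β.re| < α.re) (hα : 1 < α.re) {γ : ℝ} (hγ : 1 ≤ γ) :
    H (n + 1) α β γ = H (n + 1) 1 0 γ := by
  have hγ' : 1 ≤ (γ : ℂ).re := by simpa using hγ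
  have h1 : |(0 : ℂ).re| < (1 : ℂ).re := by simp
  have t1 := tendsto_J_ratio n (α := α - 1) (by simpa using hα) β hγ
  have t2 := tendsto_gprod_ratio (n + 1) (γ := γ) h h1 (by linarith)
  have t := (t1.mul t2)
  have hlim : ((2 : ℂ) ^ (2 * (α - 1))) ^ (n + 1) * (((2 : ℂ) ^ (2 * (1 : ℂ))) ^ (n + 1) /
      ((2 : ℂ) ^ (2 * α)) ^ (n + 1)) = 1 := by
    have : (2 : ℂ) ^ (2 * α) = (2 : ℂ) ^ (2 * (α - 1)) * (2 : ℂ) ^ (2 * (1 : ℂ)) := by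
      rw [← Complex.cpow_add _ _ (by norm_num)]; congr 1; ring
    rw [this, ← div_pow, ← mul_pow]
    have z1 : (2 : ℂ) ^ (2 * (α - 1)) ≠ 0 := by simp
    have z2 : (2 : ℂ) ^ (2 * (1 : ℂ)) ≠ 0 := by simp
    generalize (2 : ℂ) ^ (2 * (α - 1)) = X at *
    generalize (2 : ℂ) ^ (2 * (1 : ℂ)) = Y at *
    rw [show X * (Y / (X * Y)) = 1 by field_simp, one_pow]
  rw [hlim] at t
  have t' : Tendsto (fun _ : ℕ => H (n + 1) α β γ / H (n + 1) 1 0 γ) atTop (𝓝 1) := by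
    refine t.congr fun N => ?_
    rw [← H_shift_succ (n + 1) h hγ' N, ← H_shift_succ (n + 1) h1 hγ' N, sub_add_cancel,
      div_mul_div_comm]
  have hfin := tendsto_nhds_unique tendsto_const_nhds t'
  have hne : H (n + 1) 1 0 γ ≠ 0 := by
    intro h0; rw [h0, div_zero] at hfin; exact zero_ne_one hfin
  exact (div_eq_one_iff_eq hne).1 hfin

/-! ### Rotation invariance -/

instance fact_two_pi : Fact (0 < 2 * Real.pi) := ⟨Real.two_pi_pos⟩

/-- `cpw c` as a function on the circle `ℝ / 2πℤ`. -/
noncomputable def cpwCircle (c : ℂ) (z : AddCircle (2 * Real.pi)) : ℂ :=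
  ((‖1 - (AddCircle.toCircle z : ℂ)‖ : ℝ) : ℂ) ^ c

lemma cpwCircle_mk (c : ℂ) (x : ℝ) : cpwCircle c (x : AddCircle (2 * Real.pi)) = cpw c x := by
  rw [cpwCircle, cpw, AddCircle.toCircle_apply_mk, Circle.coe_exp,
    ← norm_exp_sub_one x]
  congr 5
  have : (2 * Real.pi / (2 * Real.pi)) = 1 := div_self Real.two_pi_pos.ne'
  rw [this]; push_cast; ring

lemma continuous_cpwCircle {c : ℂ} (hc : 0 < c.re) : Continuous (cpwCircle c) := by
  unfold cpwCircle
  refine (Complex.continuous_ofReal_cpow_const hc).comp ?_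
  have := AddCircle.continuous_toCircle (T := 2 * Real.pi)
  fun_prop

lemma measurePreserving_torus_mk (n : ℕ) :
    MeasurePreserving (fun θ : Fin n → ℝ => fun j => (θ j : AddCircle (2 * Real.pi)))
      (torus n) volume := by
  refine measurePreserving_pi (fun _ : Fin n => circ) (fun _ => volume) fun _ => ?_
  have := AddCircle.measurePreserving_mk (2 * Real.pi) 0
  rwa [zero_add] at this

/-- Translation of all variables by `x` moves the marked point of the weight from `e^{ix}`
to `1`. -/
lemma integral_translate (n : ℕ) {γ : ℂ} (hγ : 0 < γ.re) (x : ℝ) :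
    ∫ y : Fin n → ℝ, vand γ y * ∏ j, cpw (2 * γ) (x - y j) ∂torus n = J n γ 0 γ := by
  have h2 : 0 < (2 * γ).re := by simpa using hγ
  set F : (Fin n → AddCircle (2 * Real.pi)) → ℂ := fun z =>
    (∏ j, ∏ k ∈ {j}ᶜ, cpwCircle γ (z j - z k)) * ∏ j, cpwCircle (2 * γ) (z j) with hF
  have hFc : Continuous F := by
    have h1 := continuous_cpwCircle hγ
    have h3 := continuous_cpwCircle h2
    refine Continuous.mul ?_ ?_
    · exact continuous_finsetProd _ fun j _ => continuous_finsetProd _ fun k _ =>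
        h1.comp (by fun_prop)
    · exact continuous_finsetProd _ fun j _ => h3.comp (by fun_prop)
  have hmp := measurePreserving_torus_mk n
  have key : ∀ G : (Fin n → AddCircle (2 * Real.pi)) → ℂ, Continuous G →
      ∫ y : Fin n → ℝ, G (fun j => (y j : AddCircle (2 * Real.pi))) ∂torus n = ∫ z, G z := by
    intro G hG
    rw [← hmp.map_eq, integral_map hmp.measurable.aemeasurable hG.aestronglyMeasurable]
  have e1 : J n γ 0 γ = ∫ z, F z := by
    rw [← key F hFc, J]
    refine integral_congr_ae (Eventually.of_forall fun y => ?_)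
    simp only [hF, dens, vand, wt, ← AddCircle.coe_sub, cpwCircle_mk]
    simp
  rw [e1, ← integral_add_right_eq_self F (fun _ => ((-x : ℝ) : AddCircle (2 * Real.pi))),
    ← key (fun z => F (z + _)) (hFc.comp (by fun_prop))]
  refine integral_congr_ae (Eventually.of_forall fun y => ?_)
  simp only [hF, vand, Pi.add_apply, ← AddCircle.coe_add, ← AddCircle.coe_sub, cpwCircle_mk]
  congr 1
  · refine Finset.prod_congr rfl fun j _ => Finset.prod_congr rfl fun k _ => ?_
    congr 1; ring
  · refine Finset.prod_congr rfl fun j _ => ?_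
    rw [cpw_sub_comm]; congr 1

lemma vand_insertNth_zero {n : ℕ} {γ : ℂ} (x : ℝ) (y : Fin n → ℝ) :
    vand γ ((0 : Fin (n + 1)).insertNth x y : Fin (n + 1) → ℝ)
      = vand γ y * ∏ j, (cpw γ (x - y j)) ^ 2 := by
  simp only [vand]
  rw [Fin.prod_univ_succ, prod_compl_succAbove]
  have h : ∀ j : Fin n, ∏ k ∈ ({j.succ}ᶜ : Finset (Fin (n + 1))),
      cpw γ (((0 : Fin (n + 1)).insertNth x y : Fin (n + 1) → ℝ) j.succ
        - ((0 : Fin (n + 1)).insertNth x y : Fin (n + 1) → ℝ) k)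
      = cpw γ (y j - x) * ∏ k ∈ ({j}ᶜ : Finset (Fin n)), cpw γ (y j - y k) := by
    intro j
    have : ({j.succ}ᶜ : Finset (Fin (n + 1)))
        = insert 0 ((({j}ᶜ : Finset (Fin n))).map (Fin.succEmb n)) := by
      ext k
      refine Fin.cases ?_ (fun k => ?_) k
      · simp [(Fin.succ_ne_zero j).symm]
      · simp
    rw [this, Finset.prod_insert (by simp), Finset.prod_map]
    simp
  rw [Finset.prod_congr rfl fun j _ => h j, Finset.prod_mul_distrib]
  simp only [Fin.insertNth_apply_same, Fin.insertNth_apply_succAbove]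
  rw [← mul_assoc, mul_comm, ← Finset.prod_mul_distrib]
  congr 1
  refine Finset.prod_congr rfl fun j _ => ?_
  rw [cpw_sub_comm γ (y j) x, sq]

/-- Rotation invariance: freezing one of the `n + 1` points of the unweighted integral at `1`
leaves the `n`-point integral with `α = γ`. -/
lemma J_rotate (n : ℕ) {γ : ℂ} (hγ : 0 < γ.re) :
    J (n + 1) 0 0 γ = 2 * Real.pi * J n γ 0 γ := by
  have h0 : ∀ x, wt 0 0 x = 1 := fun x => by simp [wt, cpw]
  have hd : Integrable (fun θ : Fin (n + 1) → ℝ => dens 0 0 γ θ) (torus (n + 1)) := by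
    refine integrable_dens ⟨by simp, by positivity, ?_⟩
    push_cast
    have : 0 ≤ (n : ℝ) * γ.re := by positivity
    simp; linarith
  rw [J, integral_torus_split 0, integral_prod _ ((integrable_torus_iff 0 _).1 hd)]
  have : ∀ x : ℝ, ∫ y : Fin n → ℝ,
      dens 0 0 γ ((0 : Fin (n + 1)).insertNth x y : Fin (n + 1) → ℝ) ∂torus n = J n γ 0 γ := by
    intro x
    rw [← integral_translate n hγ x]
    refine integral_congr_ae (Eventually.of_forall fun y => ?_)
    simp only [dens, h0, Finset.prod_const_one, mul_one, vand_insertNth_zero]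
    congr 1
    refine Finset.prod_congr rfl fun j _ => ?_
    rw [cpw, cpw, ← Complex.cpow_nat_mul]
    norm_num
  simp only [this, integral_const, circ]
  simp [Real.pi_pos.le, Measure.real]

/-! ### Evaluation for real `γ ≥ 1` -/

/-- The `α`- and `β`-dependent part of the closed form. -/
noncomputable def gquot (n : ℕ) (α β γ : ℂ) : ℂ :=
  ∏ j ∈ Finset.range n, Complex.Gamma (1 + 2 * α + j * γ) *
    (Complex.Gamma (1 + α + β + j * γ))⁻¹ * (Complex.Gamma (1 + α - β + j * γ))⁻¹

/-- The remaining part of the closed form. -/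
noncomputable def cfac (n : ℕ) (γ : ℂ) : ℂ :=
  ∏ j ∈ Finset.range n, Complex.Gamma (1 + (j + 1) * γ) * (Complex.Gamma (1 + γ))⁻¹

lemma gprod_mul_gquot (n : ℕ) {α β γ : ℂ} (h : |β.re| < α.re) (hγ : 0 ≤ γ.re) :
    gprod n α β γ * gquot n α β γ = 1 := by
  obtain ⟨h1, h2⟩ := abs_lt.1 h
  rw [gprod, gquot, ← Finset.prod_mul_distrib]
  refine Finset.prod_eq_one fun j _ => ?_
  have a1 : Complex.Gamma (1 + α + β + j * γ) ≠ 0 :=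
    Complex.Gamma_ne_zero_of_re_pos (re_add_nat_mul_pos (by simp; linarith) hγ j)
  have a2 : Complex.Gamma (1 + α - β + j * γ) ≠ 0 :=
    Complex.Gamma_ne_zero_of_re_pos (re_add_nat_mul_pos (by simp; linarith) hγ j)
  have a3 : Complex.Gamma (1 + 2 * α + j * γ) ≠ 0 :=
    Complex.Gamma_ne_zero_of_re_pos (re_add_nat_mul_pos (by simp; linarith) hγ j)
  generalize Complex.Gamma (1 + 2 * α + j * γ) = X at *
  field_simp

lemma Gamma_ne_neg_nat {s : ℂ} (hs : 0 < s.re) (m : ℕ) : s ≠ -m := by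
  rintro rfl
  have : (0 : ℝ) ≤ m := m.cast_nonneg
  simp at hs
  linarith

lemma differentiableOn_Gamma_comp {f : ℂ → ℂ} {U : Set ℂ} (hf : Differentiable ℂ f)
    (h : ∀ z ∈ U, 0 < (f z).re) : DifferentiableOn ℂ (fun z => Complex.Gamma (f z)) U :=
  fun z hz => ((Complex.differentiableAt_Gamma _ (Gamma_ne_neg_nat (h z hz))).comp z
    (hf z)).differentiableWithinAt

lemma differentiable_Gamma_inv_comp {f : ℂ → ℂ} (hf : Differentiable ℂ f) :
    Differentiable ℂ (fun z => (Complex.Gamma (f z))⁻¹) :=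
  Complex.differentiable_one_div_Gamma.comp hf

/-- The dependence of the integral on `α` and `β`, up to a constant depending on `n` and `γ`. -/
lemma J_eq_const_mul (n : ℕ) {α : ℂ} (β : ℂ) (hα : -(1 / 2) < α.re) {γ : ℝ} (hγ : 1 ≤ γ) :
    J (n + 1) α β γ = H (n + 1) 1 0 γ * gquot (n + 1) α β γ := by
  refine eqOn_halfPlane (f := fun α => J (n + 1) α β γ)
    (g := fun α => H (n + 1) 1 0 γ * gquot (n + 1) α β γ) (s₀ := -(1 / 2))
    (R := max 1 |β.re|) ?_ ?_ ?_ hα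
  · refine differentiableOn_J_α (n + 1) β γ fun s hs => ?_
    have h0 : 0 ≤ (n : ℝ) * γ := by positivity
    refine ⟨by linarith, ?_, ?_⟩
    · simp only [Complex.ofReal_re]; positivity
    · push_cast; simp only [Complex.ofReal_re]; nlinarith
  · refine DifferentiableOn.const_mul ?_ _
    unfold gquot
    refine DifferentiableOn.fun_finsetProd fun j _ => ?_
    refine DifferentiableOn.mul (DifferentiableOn.mul ?_ ?_) ?_
    · refine differentiableOn_Gamma_comp (by fun_prop) fun z hz => ?_
      have hz' : -(1 / 2) < z.re := hz
      refine re_add_nat_mul_pos ?_ (by simp; linarith) j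
      simp; linarith
    · exact (differentiable_Gamma_inv_comp (by fun_prop)).differentiableOn
    · exact (differentiable_Gamma_inv_comp (by fun_prop)).differentiableOn
  · intro x hx
    obtain ⟨h1, h2⟩ := max_lt_iff.1 hx
    have hb : |β.re| < ((x : ℂ)).re := by simpa using h2
    have e := H_eq n hb (by simpa using h1) hγ
    have e2 := gprod_mul_gquot (n + 1) hb (γ := γ) (by simp; linarith)
    rw [← e, H, mul_assoc, e2, mul_one]

lemma J_zero (α β γ : ℂ) : J 0 α β γ = 1 := by
  simp [J, dens, vand, torus, Measure.real]

lemma prod_telescope {g : ℕ → ℂ} (hg : ∀ j, g j ≠ 0) (n : ℕ) :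
    (∏ j ∈ Finset.range n, (g (j + 1) * (g j)⁻¹ * (g j)⁻¹)) * ∏ j ∈ Finset.range n, g j
      = g n * (g 0)⁻¹ := by
  induction n with
  | zero => simp [hg 0]
  | succ n ih =>
    rw [Finset.prod_range_succ, Finset.prod_range_succ, mul_mul_mul_comm, ih]
    have h1 := hg n
    have h0 := hg 0
    field_simp

/-- The value for real `γ ≥ 1`, by induction on `n`: the constant is found by comparing
`α = β = 0` with the `n`-point integral at `α = γ`. -/
lemma J_eq_of_one_le (n : ℕ) {α : ℂ} (β : ℂ) (hα : -(1 / 2) < α.re) {γ : ℝ} (hγ : 1 ≤ γ) :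
    J n α β γ = (2 * Real.pi) ^ n * (cfac n γ * gquot n α β γ) := by
  induction n generalizing α β with
  | zero => simp [J_zero, cfac, gquot]
  | succ n ih =>
    rw [J_eq_const_mul n β hα hγ, ← mul_assoc]
    congr 1
    have hγ0 : 0 < (γ : ℂ).re := by simp; linarith
    have e := J_rotate n hγ0
    rw [ih 0 (by linarith), J_eq_const_mul n 0 (by simp) hγ] at e
    have hG : ∀ j : ℕ, Complex.Gamma (1 + j * (γ : ℂ)) ≠ 0 := fun j =>
      Complex.Gamma_ne_zero_of_re_pos (re_add_nat_mul_pos (by simp) hγ0.le j)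
    have hq0 : gquot (n + 1) 0 0 γ = (∏ j ∈ Finset.range (n + 1), Complex.Gamma (1 + j * γ))⁻¹ := by
      rw [gquot, ← Finset.prod_inv_distrib]
      refine Finset.prod_congr rfl fun j _ => ?_
      have := hG j
      simp only [mul_zero, add_zero, sub_zero]
      field_simp
    have hq : gquot n γ 0 γ = ∏ j ∈ Finset.range n, (Complex.Gamma (1 + (j + 1 + 1 : ℕ) * γ) *
        (Complex.Gamma (1 + (j + 1 : ℕ) * γ))⁻¹ * (Complex.Gamma (1 + (j + 1 : ℕ) * γ))⁻¹) := by
      refine Finset.prod_congr rfl fun j _ => ?_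
      push_cast
      congr 3 <;> ring_nf
    have hc : ∀ m, cfac m γ = ∏ j ∈ Finset.range m,
        (Complex.Gamma (1 + (j + 1 : ℕ) * γ) * (Complex.Gamma (1 + γ))⁻¹) := by
      intro m
      simp [cfac]
    have hP : ∏ j ∈ Finset.range (n + 1), Complex.Gamma (1 + j * (γ : ℂ)) ≠ 0 :=
      Finset.prod_ne_zero_iff.2 fun j _ => hG j
    rw [hq0, mul_inv_eq_iff_eq_mul₀ hP] at e
    rw [e, Finset.prod_range_succ', hq, hc, hc]
    have hg1 := hG 1
    rw [Nat.cast_one, one_mul] at hg1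
    have key : (∏ j ∈ Finset.range n, (Complex.Gamma (1 + (j + 1 + 1 : ℕ) * (γ : ℂ)) *
        (Complex.Gamma (1 + (j + 1 : ℕ) * γ))⁻¹ * (Complex.Gamma (1 + (j + 1 : ℕ) * γ))⁻¹)) *
        ∏ j ∈ Finset.range n, Complex.Gamma (1 + (j + 1 : ℕ) * (γ : ℂ))
        = Complex.Gamma (1 + (n + 1 : ℕ) * γ) * (Complex.Gamma (1 + γ))⁻¹ := by
      have ht := prod_telescope (g := fun j : ℕ => Complex.Gamma (1 + (j + 1 : ℕ) * (γ : ℂ)))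
        (fun j => hG (j + 1)) n
      simpa using ht
    rw [Finset.prod_range_succ, ← key]
    simp only [Nat.cast_zero, zero_mul, add_zero, Complex.Gamma_one]
    ring

/-! ### Continuation in `γ` -/

lemma Dom.succ_mul_pos {n : ℕ} {α γ : ℝ} (h : Dom n α γ) {j : ℕ} (hj : j < n) :
    0 < 1 + (j + 1) * γ := by
  have h1 : (j : ℝ) + 1 ≤ n := by exact_mod_cast hj
  have h2 := h.g
  rcases le_total 0 γ with h0 | h0
  · positivity
  · nlinarith

lemma Dom.two_mul_add_pos {n : ℕ} {α γ : ℝ} (h : Dom n α γ) {j : ℕ} (hj : j < n) :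
    0 < 1 + 2 * α + j * γ := by
  have h1 : (j : ℝ) + 1 ≤ n := by exact_mod_cast hj
  have h2 := h.ag
  have h3 := h.a
  rcases le_total 0 γ with h0 | h0
  · positivity
  · nlinarith

/-- The value of the integral on the half-plane of convergence in `γ`. -/
lemma J_eq (n : ℕ) {α : ℂ} (β : ℂ) (hα : -(1 / 2) < α.re) {s₀ : ℝ}
    (h : ∀ s, s₀ < s → Dom n α.re s) {γ : ℂ} (hγ : s₀ < γ.re) :
    J n α β γ = (2 * Real.pi) ^ n * (cfac n γ * gquot n α β γ) := by
  refine eqOn_halfPlane (f := fun γ => J n α β γ)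
    (g := fun γ => (2 * Real.pi) ^ n * (cfac n γ * gquot n α β γ)) (s₀ := s₀) (R := 1)
    (differentiableOn_J_γ n α β h) ?_ (fun x hx => J_eq_of_one_le n β hα hx.le) hγ
  refine DifferentiableOn.const_mul (DifferentiableOn.mul ?_ ?_) _
  · unfold cfac
    refine DifferentiableOn.fun_finsetProd fun j hj => DifferentiableOn.mul ?_ ?_
    · refine differentiableOn_Gamma_comp (by fun_prop) fun z hz => ?_
      have := (h z.re hz).succ_mul_pos (Finset.mem_range.1 hj)
      simpa using this
    · exact (differentiable_Gamma_inv_comp (by fun_prop)).differentiableOn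
  · unfold gquot
    refine DifferentiableOn.fun_finsetProd fun j hj =>
      DifferentiableOn.mul (DifferentiableOn.mul ?_ ?_) ?_
    · refine differentiableOn_Gamma_comp (by fun_prop) fun z hz => ?_
      have := (h z.re hz).two_mul_add_pos (Finset.mem_range.1 hj)
      simpa using this
    · exact (differentiable_Gamma_inv_comp (by fun_prop)).differentiableOn
    · exact (differentiable_Gamma_inv_comp (by fun_prop)).differentiableOn

/-- Away from coincidences, the product over pairs `j < k` with exponent `2γ` is the product over
ordered pairs with exponent `γ`. -/
lemma dens_eq_logs {n : ℕ} (α β γ : ℂ) (θ : Fin n → ℝ) (h0 : ∀ j, chord (θ j) ≠ 0)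
    (h1 : ∀ j k, j ≠ k → chord (θ j - θ k) ≠ 0) :
    (∏ j : Fin n, ∏ k ∈ Finset.Ioi j,
        Complex.exp (2 * γ *
          (Real.log ‖Complex.exp (Complex.I * (θ j : ℂ)) -
            Complex.exp (Complex.I * (θ k : ℂ))‖ : ℂ))) *
      ∏ j : Fin n,
        Complex.exp (Complex.I * ((θ j - Real.pi : ℝ) : ℂ) * β) *
          Complex.exp (2 * α *
            (Real.log ‖1 - Complex.exp (Complex.I * (θ j : ℂ))‖ : ℂ)) = dens α β γ θ := by
  rw [dens, vand]
  congr 1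
  · rw [← Finset.prod_prod_Ioi_mul_eq_prod_prod_off_diag (fun j k => cpw γ (θ k - θ j))]
    refine Finset.prod_congr rfl fun j _ => Finset.prod_congr rfl fun k hk => ?_
    have hjk : j ≠ k := (Finset.mem_Ioi.1 hk).ne
    simp only [cpw_sub_comm γ (θ k) (θ j)]
    rw [cpw_eq_exp γ (h1 j k hjk), ← Complex.exp_add, norm_exp_sub_exp]
    congr 1; ring
  · refine Finset.prod_congr rfl fun j _ => ?_
    rw [wt, cpw_eq_exp _ (h0 j), norm_exp_sub_one]

/-- The half-plane in the hypothesis on `γ` lies in the domain of absolute convergence. -/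
lemma dom_of_min_lt {n : ℕ} (hn : 1 ≤ n) {α : ℂ} (hα : -(1 / 2 : ℝ) < α.re) (s : ℝ)
    (hs : -(min ((n : ℝ))⁻¹
        (if n = 1 then ((n : ℝ))⁻¹ else (2 * α + 1).re / ((n : ℝ) - 1))) < s) :
    Dom n α.re s := by
  have hn0 : (0 : ℝ) < n := by exact_mod_cast hn
  rw [neg_lt, lt_min_iff] at hs
  obtain ⟨h1, h2⟩ := hs
  refine ⟨by linarith, ?_, ?_⟩
  · have := mul_lt_mul_of_pos_left h1 hn0
    rw [mul_inv_cancel₀ hn0.ne'] at this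
    linarith
  · split_ifs at h2 with h
    · subst h; simp; linarith
    · have hn1 : (0 : ℝ) < n - 1 := by
        have : (1 : ℝ) < n := by exact_mod_cast lt_of_le_of_ne hn (Ne.symm h)
        linarith
      rw [lt_div_iff₀ hn1] at h2
      simp at h2
      linarith

end Morris

/-- **Selberg–Morris integral.** For `n ≥ 1`, `Re α > −1/2` and
`Re γ > −min{1/n, Re(2α+1)/(n−1)}` (the second constraint being vacuous for `n = 1`),
`∫⋯∫ ∏_{j<k} |e^{iθ_j} − e^{iθ_k}|^{2γ} ∏_j e^{i(θ_j−π)β}|1 − e^{iθ_j}|^{2α} dθ_j/(2π)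
 = ∏_{j=0}^{n−1} Γ(1+2α+jγ)Γ(1+(j+1)γ)/(Γ(1+α+β+jγ)Γ(1+α−β+jγ)Γ(1+γ))`,
where complex powers of moduli are defined via `|w|^{2γ} = exp(2γ log|w|)`. -/
theorem selberg_morris_integral
    (n : ℕ) (hn : 1 ≤ n) (α β γ : ℂ) (hα : -(1 / 2 : ℝ) < α.re)
    (hγ : -(min ((n : ℝ))⁻¹
        (if n = 1 then ((n : ℝ))⁻¹ else (2 * α + 1).re / ((n : ℝ) - 1))) < γ.re) :
    (((2 * Real.pi : ℝ) : ℂ))⁻¹ ^ n *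
      ∫ θ : Fin n → ℝ in Set.univ.pi (fun _ : Fin n => Set.Ioc (0 : ℝ) (2 * Real.pi)),
        (∏ j : Fin n, ∏ k ∈ Finset.Ioi j,
            Complex.exp (2 * γ *
              (Real.log ‖Complex.exp (Complex.I * (θ j : ℂ)) -
                Complex.exp (Complex.I * (θ k : ℂ))‖ : ℂ))) *
          ∏ j : Fin n,
            Complex.exp (Complex.I * ((θ j - Real.pi : ℝ) : ℂ) * β) *
              Complex.exp (2 * α *
                (Real.log ‖1 - Complex.exp (Complex.I * (θ j : ℂ))‖ : ℂ))
      = ∏ j ∈ Finset.range n,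
          (Complex.Gamma (1 + 2 * α + (j : ℂ) * γ) *
              Complex.Gamma (1 + ((j : ℂ) + 1) * γ)) /
            (Complex.Gamma (1 + α + β + (j : ℂ) * γ) *
              Complex.Gamma (1 + α - β + (j : ℂ) * γ) * Complex.Gamma (1 + γ)) := by
  have e : ∫ θ : Fin n → ℝ in Set.univ.pi (fun _ : Fin n => Set.Ioc (0 : ℝ) (2 * Real.pi)),
        (∏ j : Fin n, ∏ k ∈ Finset.Ioi j,
            Complex.exp (2 * γ *
              (Real.log ‖Complex.exp (Complex.I * (θ j : ℂ)) -
                Complex.exp (Complex.I * (θ k : ℂ))‖ : ℂ))) *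
          ∏ j : Fin n,
            Complex.exp (Complex.I * ((θ j - Real.pi : ℝ) : ℂ) * β) *
              Complex.exp (2 * α *
                (Real.log ‖1 - Complex.exp (Complex.I * (θ j : ℂ))‖ : ℂ)) = Morris.J n α β γ := by
    rw [← Morris.torus_eq_restrict, Morris.J]
    refine integral_congr_ae ?_
    filter_upwards [Morris.ae_torus_generic n] with θ hθ
    exact Morris.dens_eq_logs α β γ θ hθ.1 hθ.2
  rw [e, Morris.J_eq n β hα (Morris.dom_of_min_lt hn hα) hγ, ← mul_assoc]
  have hpi : ((2 * Real.pi : ℝ) : ℂ) ≠ 0 := by exact_mod_cast Real.two_pi_pos.ne'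
  have hpow : (((2 * Real.pi : ℝ) : ℂ))⁻¹ ^ n * (2 * Real.pi) ^ n = 1 := by
    push_cast at hpi ⊢
    rw [← mul_pow, inv_mul_cancel₀ hpi, one_pow]
  rw [hpow, one_mul, Morris.cfac, Morris.gquot, ← Finset.prod_mul_distrib]
  refine Finset.prod_congr rfl fun j _ => ?_
  rw [div_eq_mul_inv, mul_inv, mul_inv]
  ring
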